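/- arXiv:2101.12621 — 3 statements merged into one kernel-verified Lean document; each statement's English description precedes it below -/
import Mathlib

section
/- Let P be a finite pure weighted graded poset of rank d possessing Property UL with constants (c^xyz_j, c^dia_j, c^sqr_j), with c^dia_j > 0 for all j, and let α_0,…,α_{d−1} be real numbers. Then for every 0 ≤ k ≤ d−1 and every f ∈ C^k with ⟨f,1⟩ = 0, there exist g_j, h_j ∈ C^j with ⟨g_j,1⟩ = ⟨h_j,1⟩ = 0 for 0 ≤ j ≤ k, such that: (1) f = g_k; (2) for all j ≤ k, ‖g_j‖² = Σ_{i=0}^j ‖h_i‖²; (3) for all j ≤ k, ‖U_j g_j‖² = Σ_{i=0}^j a_{j,i}·‖h_i‖² + Σ_{i=0}^j b_{j,i}·Σ_{x∈P(i−1)} m(x)·⟨(g_i)_x, (M^+_{x,0} − α_i·Id)(Id − M^−_{x,0})(g_i)_x⟩_x, where a_{l,r} = 1 − Π_{j=r}^{l} (1−α_j)/c^dia_j and b_{l,r} = (1/c^dia_r)·Π_{j=r+1}^{l} (1−α_j)/c^dia_j (empty products equal 1). -/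
open Finset

attribute [local instance] Classical.propDecidable

noncomputable section

/-- A finite pure weighted graded poset of rank `d`, presented as a rank function
and a weight scheme on a finite partial order `P`. -/
structure WGP (P : Type) [Fintype P] [PartialOrder P] where
  /-- the rank of the poset -/
  d : ℤ
  /-- the rank function -/
  rk : P → ℤ
  rk_mono : Monotone rk
  rk_lb : ∀ x, -1 ≤ rk x
  rk_ub : ∀ x, rk x ≤ d
  rk_covBy : ∀ a b : P, a ⋖ b → rk b = rk a + 1
  bot_unique : ∃! x : P, rk x = -1
  isPure : ∀ x : P, ∃ y : P, rk y = d ∧ x ≤ y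
  /-- the weight function -/
  m : P → ℝ
  m_pos : ∀ x, 0 < m x
  /-- the transition probabilities: `p y x` is `p_{y → x}` -/
  p : P → P → ℝ
  p_nonneg : ∀ y x, 0 ≤ p y x
  p_pos_iff : ∀ y x, 0 < p y x ↔ x ⋖ y
  p_sum : ∀ y, 0 ≤ rk y → ∑ x ∈ univ.filter (fun x => x ⋖ y), p y x = 1
  m_eq : ∀ x, rk x < d → m x = ∑ y ∈ univ.filter (fun y => x ⋖ y), p y x * m y
  m_bot : ∀ x, rk x = -1 → m x = 1

/-- `T` has at most `n` eigenvalues greater than `c`, counted with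
(geometric) multiplicity. -/
def eigMultAboveLe {V : Type*} [AddCommGroup V] [Module ℝ V]
    (T : Module.End ℝ V) (c : ℝ) (n : ℕ) : Prop :=
  ∀ s : Finset ℝ, (∀ μ ∈ s, c < μ) →
    ∑ μ ∈ s, Module.finrank ℝ (T.eigenspace μ) ≤ n

/-- `μ` is the second largest eigenvalue of `T`, counted with multiplicity. -/
def IsSecondLargestEig {V : Type*} [AddCommGroup V] [Module ℝ V]
    (T : Module.End ℝ V) (μ : ℝ) : Prop :=
  T.HasEigenvalue μ ∧ eigMultAboveLe T μ 1 ∧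
    ∃ s : Finset ℝ, (∀ ν ∈ s, μ ≤ ν) ∧
      2 ≤ ∑ ν ∈ s, Module.finrank ℝ (T.eigenspace ν)

/-- `ν` is the least eigenvalue of `T`. -/
def IsLeastEig {V : Type*} [AddCommGroup V] [Module ℝ V]
    (T : Module.End ℝ V) (ν : ℝ) : Prop :=
  T.HasEigenvalue ν ∧ ∀ c : ℝ, T.HasEigenvalue c → ν ≤ c

/-- `λ(T) ≤ lam`, i.e. the second largest eigenvalue of `T` (with multiplicity)
is at most `lam` and the least eigenvalue is at least `-lam`. -/
def lamBd {V : Type*} [AddCommGroup V] [Module ℝ V]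
    (T : Module.End ℝ V) (lam : ℝ) : Prop :=
  eigMultAboveLe T lam 1 ∧ ∀ c : ℝ, T.HasEigenvalue c → -lam ≤ c

namespace WGP

variable {P : Type} [Fintype P] [PartialOrder P] (W : WGP P)

/-- The level set `P(i)`. -/
def lvl (i : ℤ) : Finset P := univ.filter (fun x => W.rk x = i)

/-- The weighted inner product on `C^i`. -/
def innerAt (i : ℤ) (f g : P → ℝ) : ℝ := ∑ x ∈ W.lvl i, W.m x * f x * g x

/-- The squared norm on `C^i`. -/
def normSqAt (i : ℤ) (f : P → ℝ) : ℝ := W.innerAt i f f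

/-- The norm on `C^i`. -/
def normAt (i : ℤ) (f : P → ℝ) : ℝ := Real.sqrt (W.normSqAt i f)

/-- The matrix of transition probabilities : entry `(y, x)` is `p_{y→x}`,
which vanishes unless `x ⋖ y`.  This is also the matrix of the up operator. -/
def upMat : Matrix P P ℝ := Matrix.of fun y x => W.p y x

/-- The matrix of the down operator. -/
def downMat : Matrix P P ℝ := Matrix.of fun x y => W.p y x * W.m y / W.m x

/-- The up operator `U`. -/
def Up (f : P → ℝ) : P → ℝ := W.upMat.mulVec f

/-- The down operator `D`. -/
def Down (f : P → ℝ) : P → ℝ := W.downMat.mulVec f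

/-- `chSum x y = Σ_{c ∈ Ch(y→x)} p(c)`, the total `p`-weight of maximal chains
from `x` up to `y` (the entry of the corresponding power of the transition
matrix). -/
def chSum (x y : P) : ℝ := (W.upMat ^ (W.rk y - W.rk x).toNat) y x

/-- The induced weight function of the link `P_x`. -/
def mL (x y : P) : ℝ := W.m y / W.m x * W.chSum x y

/-- The induced transition probabilities of the link `P_x` :
`pL x z y = (p_x)_{z → y}`. -/
def pL (x z y : P) : ℝ := W.p z y * W.chSum x y / W.chSum x z

/-- The level set `P_x(j)` of the link of `x`. -/
def linkLvl (x : P) (j : ℤ) : Finset P :=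
  univ.filter (fun y => x ≤ y ∧ W.rk y = W.rk x + 1 + j)

/-- The inner product of the link `P_x` at link-level `j`. -/
def innerL (x : P) (j : ℤ) (f g : P → ℝ) : ℝ :=
  ∑ y ∈ W.linkLvl x j, W.mL x y * f y * g y

/-- The matrix of the up operator of the link `P_x`. -/
def upMatL (x : P) : Matrix P P ℝ :=
  Matrix.of fun z y => if y ⋖ z ∧ x ≤ y then W.pL x z y else 0

/-- The matrix of the down operator of the link `P_x`. -/
def downMatL (x : P) : Matrix P P ℝ :=
  Matrix.of fun y z => if y ⋖ z then W.pL x z y * W.mL x z / W.mL x y else 0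

/-- The up operator of the link `P_x`. -/
def UpL (x : P) (f : P → ℝ) : P → ℝ := (W.upMatL x).mulVec f

/-- The down operator of the link `P_x`. -/
def DownL (x : P) (f : P → ℝ) : P → ℝ := (W.downMatL x).mulVec f

/-- The up-down walk `M^+_{x,0}` of the link `P_x`. -/
def MplusL (x : P) (f : P → ℝ) : P → ℝ := W.DownL x (W.UpL x f)

/-- The down-up walk `M^-_{x,0}` of the link `P_x`. -/
def MminusL (x : P) (f : P → ℝ) : P → ℝ := W.UpL x (W.DownL x f)

/-- The adjacency matrix. -/
def adjMat : Matrix P P ℝ := Matrix.of fun y x =>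
  if x = y then 0 else
    ∑ z ∈ univ.filter (fun z => x ⋖ z ∧ y ⋖ z),
      W.m z * W.p z x * W.p z y / ((1 - W.p z y) * W.m y)

/-- The adjacency operator. -/
def Adj (f : P → ℝ) : P → ℝ := W.adjMat.mulVec f

/-- The adjacency matrix of the link `P_x`. -/
def adjMatL (x : P) : Matrix P P ℝ := Matrix.of fun y w =>
  if w = y then 0 else
    ∑ z ∈ univ.filter (fun z => w ⋖ z ∧ y ⋖ z),
      W.mL x z * W.pL x z w * W.pL x z y / ((1 - W.pL x z y) * W.mL x y)

/-- The adjacency operator of the link `P_x`. -/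
def AdjL (x : P) (f : P → ℝ) : P → ℝ := (W.adjMatL x).mulVec f

/-- The up-down walk `M^+_l` as an endomorphism of `C^l`. -/
def MplusEnd (l : ℤ) : Module.End ℝ ({x : P // W.rk x = l} → ℝ) :=
  ((W.downMat * W.upMat).submatrix Subtype.val Subtype.val).mulVecLin

/-- The up-down walk `M^+_{x,0}` as an endomorphism of `C^0(P_x)`. -/
def MplusEndL (x : P) : Module.End ℝ ({y : P // x ⋖ y} → ℝ) :=
  ((W.downMatL x * W.upMatL x).submatrix Subtype.val Subtype.val).mulVecLin

/-- The adjacency operator `A_x` of the link `P_x` as an endomorphism of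
`C^0(P_x)`. -/
def AdjEndL (x : P) : Module.End ℝ ({y : P // x ⋖ y} → ℝ) :=
  ((W.adjMatL x).submatrix Subtype.val Subtype.val).mulVecLin

/-- A standard weight scheme. -/
def Standard : Prop :=
  ∀ y x : P, x ⋖ y → W.p y x = 1 / ((univ.filter (fun z => z ⋖ y)).card : ℝ)

/-- `P` is lower regular at level `i` with constant `N`. -/
def LowerRegAt (i : ℤ) (N : ℕ) : Prop :=
  ∀ y : P, W.rk y = i → (univ.filter (fun z => z ⋖ y)).card = N

/-- `P` is middle regular at level `i` with constant `N`. -/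
def MiddleRegAt (i : ℤ) (N : ℕ) : Prop :=
  ∀ x z : P, W.rk x = i + 1 → W.rk z = i - 1 → z < x →
    (univ.filter (fun y => z ⋖ y ∧ y ⋖ x)).card = N

/-- `P` is `∨∧`-regular at level `i` with constant `N`. -/
def WedgeRegAt (i : ℤ) (N : ℕ) : Prop :=
  ∀ y₁ y₂ : P, W.rk y₁ = i → W.rk y₂ = i → y₁ ≠ y₂ → (∃ z, y₁ ⋖ z ∧ y₂ ⋖ z) →
    (univ.filter (fun s => s ⋖ y₁ ∧ s ⋖ y₂)).card = N

/-- `P` is `⅄`-regular with constant `R`. -/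
def WyeReg (R : ℕ) : Prop :=
  ∀ u y₁ y₂ : P, W.rk u = 2 → W.rk y₁ = 0 → W.rk y₂ = 0 → y₁ ≠ y₂ →
    y₁ < u → y₂ < u →
    (univ.filter (fun z => y₁ ⋖ z ∧ y₂ ⋖ z ∧ z ⋖ u)).card = R

/-- Property UL.1 with constants `c`. -/
def UL1 (c : ℤ → ℝ) : Prop :=
  ∀ l : ℤ, 0 ≤ l → l < W.d → ∀ y : P, W.rk y = l → ∀ x : P, y ⋖ x →
    ∑ z ∈ univ.filter (fun z => z ⋖ y), W.p y z ^ 2 / W.chSum z x = c l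

/-- Property UL.2 with constants `c`. -/
def UL2 (c : ℤ → ℝ) : Prop :=
  ∀ l : ℤ, 0 ≤ l → l < W.d → ∀ y₁ y₂ : P, W.rk y₁ = l → W.rk y₂ = l → y₁ ≠ y₂ →
    ∀ x : P, y₁ ⋖ x → y₂ ⋖ x →
    ∑ z ∈ univ.filter (fun z => z ⋖ y₁ ∧ z ⋖ y₂),
      W.p y₁ z * W.p y₂ z / W.chSum z x = c l

/-- Property UL.3 with constants `c`. -/
def UL3 (c : ℤ → ℝ) : Prop :=
  ∀ l : ℤ, 0 ≤ l → l < W.d → ∀ y : P, W.rk y = l →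
    ∑ x ∈ univ.filter (fun x => y ⋖ x), W.m x * W.p x y ^ 2 = c l * W.m y

/-- Property AL. -/
def AL : Prop :=
  ∀ l : ℤ, 0 ≤ l → l ≤ W.d - 1 → ∀ x y : P, W.rk x = l → W.rk y = l → x ≠ y →
    ∑ z ∈ univ.filter (fun z => x ⋖ z ∧ y ⋖ z),
        W.m z * W.p z x * W.p z y / (1 - W.p z x)
    = ∑ z ∈ univ.filter (fun z => x ⋖ z ∧ y ⋖ z),
        W.m z * W.p z x * W.p z y *
          ∑ s ∈ univ.filter (fun s => s ⋖ x ∧ s ⋖ y),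
            W.p x s * W.p y s / (W.chSum s z - W.p z x * W.p x s)

/-- Equation TL.1 with constant `c`. -/
def TL1 (c : ℝ) : Prop :=
  ∀ y : P, W.rk y = 0 →
    c * W.m y = ∑ z ∈ univ.filter (fun z => y ⋖ z), W.m z * W.p z y ^ 2 *
      ∑ x ∈ univ.filter (fun x => x ⋖ z ∧ x ≠ y), W.p z x / (1 - W.p z x) ^ 2

/-- Equation TL.2 with constant `c`. -/
def TL2 (c : ℝ) : Prop :=
  ∀ y₁ y₂ : P, W.rk y₁ = 0 → W.rk y₂ = 0 → y₁ ≠ y₂ →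
    c * ∑ z ∈ univ.filter (fun z => y₁ ⋖ z ∧ y₂ ⋖ z),
          W.m z * W.p z y₁ * W.p z y₂ / (1 - W.p z y₁)
    = ∑ z ∈ univ.filter (fun z => y₁ ⋖ z ∧ y₂ ⋖ z),
        W.m z * W.p z y₁ * W.p z y₂ *
          ∑ x ∈ univ.filter (fun x => x ⋖ z ∧ x ≠ y₁ ∧ x ≠ y₂),
            W.p z x / (1 - W.p z x) ^ 2

/-- Equation TL.3 with constant `c`. -/
def TL3 (c : ℝ) : Prop :=
  ∀ y : P, W.rk y = 0 →
    c * W.m y =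
      ∑ x ∈ univ.filter (fun x => W.rk x = 0 ∧ x ≠ y),
        ∑ z ∈ univ.filter (fun z => x ⋖ z ∧ y ⋖ z),
          ∑ w ∈ univ.filter (fun w => w ≠ z ∧ x ⋖ w ∧ y ⋖ w),
            ∑ u ∈ univ.filter (fun u => z ⋖ u ∧ w ⋖ u),
              W.m u * W.p u z * W.p u w * W.p w y * W.p z y * W.p w x * W.p z x /
                (W.chSum x u * (1 - W.p u z * W.p z x / W.chSum x u) *
                  (1 - W.p w x) * (1 - W.p z x))

/-- Equation TL.4 with constant `c`. -/
def TL4 (c : ℝ) : Prop :=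
  ∀ y₁ y₂ : P, W.rk y₁ = 0 → W.rk y₂ = 0 → y₁ ≠ y₂ →
    c * ∑ z ∈ univ.filter (fun z => y₁ ⋖ z ∧ y₂ ⋖ z),
          W.m z * W.p z y₁ * W.p z y₂ / (1 - W.p z y₁)
    = ∑ x ∈ univ.filter (fun x => W.rk x = 0 ∧ x ≠ y₁ ∧ x ≠ y₂),
        ∑ z ∈ univ.filter (fun z => x ⋖ z ∧ y₂ ⋖ z),
          ∑ w ∈ univ.filter (fun w => w ≠ z ∧ x ⋖ w ∧ y₁ ⋖ w),
            ∑ u ∈ univ.filter (fun u => z ⋖ u ∧ w ⋖ u),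
              W.m u * W.p u z * W.p u w * W.p w y₁ * W.p z y₂ * W.p w x * W.p z x /
                (W.chSum x u * (1 - W.p u z * W.p z x / W.chSum x u) *
                  (1 - W.p w x) * (1 - W.p z x))

/-- The induced function `f̂_x ∈ C^0(P_x)` of `f ∈ C^0`. -/
def hatF (x : P) (f : P → ℝ) : P → ℝ := fun z =>
  (1 / (1 - W.p z x)) * ∑ y ∈ univ.filter (fun y => y ≠ x ∧ y ⋖ z), W.p z y * f y

/-- `P` is connected: the Markov chain `M^+_0` on `P(0)` is irreducible. -/
def Connected : Prop :=
  ∀ y z : P, W.rk y = 0 → W.rk z = 0 →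
    ∃ j : ℕ, 0 < j ∧ ((W.downMat * W.upMat) ^ j) z y ≠ 0

/-- The link `P_x` is connected: the Markov chain `M^+_{x,0}` on `P_x(0)` is
irreducible. -/
def LinkConnected (x : P) : Prop :=
  ∀ y z : P, x ⋖ y → x ⋖ z →
    ∃ j : ℕ, 0 < j ∧ ((W.downMatL x * W.upMatL x) ^ j) z y ≠ 0

/-- `c` is a nontrivial eigenvalue of the adjacency operator `A` of `P`,
i.e. one with an eigenvector orthogonal to the constants. -/
def IsNontrivEigAdj (c : ℝ) : Prop :=
  ∃ f : P → ℝ, (∃ y, W.rk y = 0 ∧ f y ≠ 0) ∧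
    (∀ y, W.rk y = 0 → W.Adj f y = c * f y) ∧
    W.innerAt 0 f (fun _ => 1) = 0

/-- `c` is a nontrivial eigenvalue of the adjacency operator `A_x` of the
link `P_x`. -/
def IsNontrivEigAdjL (x : P) (c : ℝ) : Prop :=
  ∃ f : P → ℝ, (∃ y, x ⋖ y ∧ f y ≠ 0) ∧
    (∀ y, x ⋖ y → W.AdjL x f y = c * f y) ∧
    W.innerL x 0 f (fun _ => 1) = 0

end WGP


namespace WGP
variable {P : Type} [Fintype P] [PartialOrder P] (W : WGP P)

lemma p_zero {y x : P} (h : ¬ x ⋖ y) : W.p y x = 0 := by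
  have h1 := W.p_nonneg y x
  have h2 := (W.p_pos_iff y x).not.2 h
  linarith

lemma p_cov {y x : P} (h : W.p y x ≠ 0) : x ⋖ y := by
  by_contra h'; exact h (W.p_zero h')

lemma p_zero_rk {y x : P} (h : W.rk y ≠ W.rk x + 1) : W.p y x = 0 :=
  W.p_zero fun h' => h (W.rk_covBy _ _ h')

lemma p_sum' (y : P) (hy : 0 ≤ W.rk y) : ∑ x, W.p y x = 1 := by
  rw [← W.p_sum y hy, Finset.sum_filter]
  refine Finset.sum_congr rfl fun x _ => ?_
  split_ifs with h
  · rfl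
  · exact W.p_zero h

lemma m_eq' (x : P) (hx : W.rk x < W.d) : ∑ y, W.m y * W.p y x = W.m x := by
  rw [W.m_eq x hx, Finset.sum_filter]
  refine Finset.sum_congr rfl fun y _ => ?_
  split_ifs with h
  · ring
  · simp [W.p_zero h]

lemma covBy_of_rk {x y : P} (h : x ≤ y) (hr : W.rk y = W.rk x + 1) : x ⋖ y := by
  have hne : x ≠ y := by rintro rfl; omega
  refine ⟨lt_of_le_of_ne h hne, ?_⟩
  have key : ∀ a b : P, a < b → W.rk a + 1 ≤ W.rk b := by
    intro a b hab
    obtain ⟨c, hc, hcb⟩ := exists_covBy_le_of_lt hab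
    have := W.rk_covBy _ _ hc
    have := W.rk_mono hcb
    omega
  intro c hc hc'
  have := key _ _ hc
  have := key _ _ hc'
  omega

lemma Up_apply (f : P → ℝ) (y : P) : W.Up f y = ∑ x, W.p y x * f x := rfl

lemma Down_apply (f : P → ℝ) (x : P) : W.Down f x = ∑ y, W.p y x * W.m y / W.m x * f y := rfl

lemma m_Down (f : P → ℝ) (x : P) : W.m x * W.Down f x = ∑ y, W.m y * W.p y x * f y := by
  rw [Down_apply, Finset.mul_sum]
  refine Finset.sum_congr rfl fun y _ => ?_
  have := (W.m_pos x).ne'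
  field_simp

lemma chSum_self (x : P) : W.chSum x x = 1 := by simp [chSum]

lemma chSum_one {x y : P} (h : W.rk y = W.rk x + 1) : W.chSum x y = W.p y x := by
  have : (W.rk y - W.rk x).toNat = 1 := by omega
  simp [chSum, this, upMat]

/-- two-step transition -/
def q (z x : P) : ℝ := ∑ y, W.p z y * W.p y x

/-- two-step average -/
def S (z x : P) (g : P → ℝ) : ℝ := ∑ y, W.p z y * W.p y x * g y

lemma chSum_two {x z : P} (h : W.rk z = W.rk x + 2) : W.chSum x z = W.q z x := by
  have : (W.rk z - W.rk x).toNat = 2 := by omega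
  simp [chSum, this, upMat, pow_two, Matrix.mul_apply, q]

lemma adj (i : ℤ) (f g : P → ℝ) : W.innerAt i (W.Down f) g = W.innerAt (i+1) f (W.Up g) := by
  have h1 : W.innerAt i (W.Down f) g = ∑ x ∈ W.lvl i, ∑ y ∈ W.lvl (i+1), W.m y * W.p y x * f y * g x := by
    unfold innerAt
    refine Finset.sum_congr rfl fun x hx => ?_
    rw [m_Down, Finset.sum_mul]
    symm
    refine Finset.sum_subset (Finset.subset_univ _) fun y _ hy => ?_
    simp only [lvl, mem_filter, mem_univ, true_and] at hx hy
    rw [W.p_zero_rk (by omega)]; ring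
  rw [h1, Finset.sum_comm]
  unfold innerAt
  refine Finset.sum_congr rfl fun y hy => ?_
  rw [Up_apply, Finset.mul_sum]
  rw [← Finset.sum_subset (Finset.subset_univ (W.lvl i))]
  · refine Finset.sum_congr rfl fun x hx => ?_
    ring
  · intro x _ hx
    simp only [lvl, mem_filter, mem_univ, true_and] at hx hy
    rw [W.p_zero_rk (by omega)]; ring

lemma Up_one (y : P) (hy : 0 ≤ W.rk y) : W.Up (fun _ => 1) y = 1 := by
  simp [Up_apply, W.p_sum' y hy]

lemma Down_one (x : P) (hx : W.rk x < W.d) : W.Down (fun _ => 1) x = 1 := by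
  have h := W.m_Down (fun _ => 1) x
  simp only [mul_one] at h
  rw [W.m_eq' x hx] at h
  have := W.m_pos x
  field_simp at h
  exact h

lemma inner_congr {i : ℤ} {f f' g g' : P → ℝ} (h : ∀ x, W.rk x = i → f x = f' x)
    (h' : ∀ x, W.rk x = i → g x = g' x) : W.innerAt i f g = W.innerAt i f' g' := by
  unfold innerAt
  refine Finset.sum_congr rfl fun x hx => ?_
  simp only [lvl, mem_filter, mem_univ, true_and] at hx
  rw [h x hx, h' x hx]

lemma inner_Down_one (i : ℤ) (hi : -1 ≤ i) (f : P → ℝ) :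
    W.innerAt i (W.Down f) (fun _ => 1) = W.innerAt (i+1) f (fun _ => 1) := by
  rw [adj]
  exact W.inner_congr (fun _ _ => rfl) fun x hx => W.Up_one x (by omega)

lemma DownL_self (x : P) (g : P → ℝ) : W.DownL x g x = W.Down g x := by
  rw [Down_apply]
  show ∑ z, _ = _
  refine Finset.sum_congr rfl fun z _ => ?_
  simp only [downMatL, Matrix.of_apply]
  have hm := (W.m_pos x).ne'
  split_ifs with h
  · have hp := ((W.p_pos_iff z x).2 h).ne'
    rw [pL, mL, mL, chSum_self, W.chSum_one (W.rk_covBy _ _ h)]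
    field_simp
  · simp [W.p_zero h]

lemma Mminus_apply {x y : P} (h : x ⋖ y) (g : P → ℝ) : W.MminusL x g y = W.Down g x := by
  rw [← DownL_self]
  show ∑ z, _ = _
  rw [Finset.sum_eq_single x]
  · simp only [upMatL, Matrix.of_apply]
    have hp := ((W.p_pos_iff y x).2 h).ne'
    rw [if_pos ⟨h, le_rfl⟩, pL, chSum_self, W.chSum_one (W.rk_covBy _ _ h)]
    field_simp
  · intro z _ hz
    simp only [upMatL, Matrix.of_apply]
    rw [if_neg, zero_mul]
    rintro ⟨h1, h2⟩
    exact h.2 (lt_of_le_of_ne h2 hz.symm) h1.1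
  · simp

lemma UpL_apply {x z : P} (h : W.rk z = W.rk x + 2) (φ : P → ℝ) :
    W.UpL x φ z = W.S z x φ / W.q z x := by
  rw [S, Finset.sum_div]
  show ∑ y, _ = _
  refine Finset.sum_congr rfl fun y _ => ?_
  simp only [upMatL, Matrix.of_apply]
  split_ifs with h'
  · have := W.rk_covBy _ _ h'.1
    rw [pL, W.chSum_two h, W.chSum_one (by omega)]; ring
  · have : W.p z y * W.p y x = 0 := by
      by_contra hne
      exact h' ⟨W.p_cov (left_ne_zero_of_mul hne), (W.p_cov (right_ne_zero_of_mul hne)).le⟩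
    simp [this]

lemma S_eq_zero {z x : P} (h : W.q z x = 0) (φ : P → ℝ) : W.S z x φ = 0 := by
  have h0 := (Finset.sum_eq_zero_iff_of_nonneg (fun y _ =>
    mul_nonneg (W.p_nonneg z y) (W.p_nonneg y x))).1 h
  refine Finset.sum_eq_zero fun y hy => ?_
  rw [h0 y hy, zero_mul]

lemma q_pos {z y x : P} (h : x ⋖ y) (h' : y ⋖ z) : 0 < W.q z x := by
  refine lt_of_lt_of_le (mul_pos ((W.p_pos_iff z y).2 h') ((W.p_pos_iff y x).2 h)) ?_
  exact Finset.single_le_sum (f := fun y => W.p z y * W.p y x)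
    (fun y _ => mul_nonneg (W.p_nonneg z y) (W.p_nonneg y x)) (Finset.mem_univ y)

lemma Mplus_apply {x y : P} (h : x ⋖ y) (φ : P → ℝ) :
    W.m y * W.MplusL x φ y = ∑ z, W.m z * W.p z y * (W.S z x φ / W.q z x) := by
  show W.m y * (∑ z, _) = _
  rw [Finset.mul_sum]
  refine Finset.sum_congr rfl fun z _ => ?_
  simp only [downMatL, Matrix.of_apply]
  have hr := W.rk_covBy _ _ h
  split_ifs with h'
  · have hr' := W.rk_covBy _ _ h'
    have hp := ((W.p_pos_iff y x).2 h).ne'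
    have hq := (W.q_pos h h').ne'
    have hm := (W.m_pos x).ne'
    have hm' := (W.m_pos y).ne'
    have hu := W.UpL_apply (x := x) (z := z) (by omega) φ
    unfold UpL at hu
    rw [UpL, hu, pL, mL, mL, W.chSum_two (by omega : W.rk z = W.rk x + 2), W.chSum_one hr]
    field_simp
  · simp [W.p_zero h']

lemma innerL_eq (x : P) (f g : P → ℝ) :
    W.m x * W.innerL x 0 f g = ∑ y, W.m y * W.p y x * f y * g y := by
  rw [innerL, Finset.mul_sum]
  rw [← Finset.sum_subset (Finset.subset_univ (W.linkLvl x 0))]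
  · refine Finset.sum_congr rfl fun y hy => ?_
    simp only [linkLvl, mem_filter, mem_univ, true_and, add_zero] at hy
    have hm := (W.m_pos x).ne'
    rw [mL, W.chSum_one hy.2]
    field_simp
  · intro y _ hy
    rw [W.p_zero]; · ring
    intro h
    apply hy
    simp only [linkLvl, mem_filter, mem_univ, true_and, add_zero]
    exact ⟨h.le, W.rk_covBy _ _ h⟩

lemma lemA (x : P) (hx : W.rk x + 1 < W.d) (a : ℝ) (g : P → ℝ) :
    W.m x * W.innerL x 0 g
      (fun y => W.MplusL x (fun w => g w - W.MminusL x g w) y - a * (g y - W.MminusL x g y))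
    = ∑ z, W.m z * (W.S z x g ^ 2 / W.q z x) - W.m x * W.Down g x ^ 2
      - a * (∑ y, W.m y * W.p y x * g y ^ 2 - W.m x * W.Down g x ^ 2) := by
  have hS : ∀ z, W.S z x (fun w => g w - W.MminusL x g w) = W.S z x g - W.Down g x * W.q z x := by
    intro z
    rw [S, S, q, Finset.mul_sum, ← Finset.sum_sub_distrib]
    refine Finset.sum_congr rfl fun y _ => ?_
    by_cases h : x ⋖ y
    · rw [W.Mminus_apply h]; ring
    · rw [W.p_zero h]; ring
  have hD : ∑ z, W.m z * W.S z x g = W.m x * W.Down g x := by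
    rw [m_Down]
    simp only [S, Finset.mul_sum]
    rw [Finset.sum_comm]
    refine Finset.sum_congr rfl fun y _ => ?_
    by_cases h : x ⋖ y
    · have := W.rk_covBy _ _ h
      rw [← W.m_eq' y (by omega), Finset.sum_mul, Finset.sum_mul]
      refine Finset.sum_congr rfl fun z _ => ?_
      ring
    · simp [W.p_zero h]
  have h1 : ∑ y, W.m y * W.p y x * g y * W.MplusL x (fun w => g w - W.MminusL x g w) y
      = ∑ z, W.m z * (W.S z x g ^ 2 / W.q z x) - W.m x * W.Down g x ^ 2 := by
    have e1 : ∀ y, W.m y * W.p y x * g y * W.MplusL x (fun w => g w - W.MminusL x g w) y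
       = ∑ z, W.m z * ((W.S z x g - W.Down g x * W.q z x) / W.q z x) * (W.p z y * W.p y x * g y) := by
      intro y
      by_cases h : x ⋖ y
      · have := W.Mplus_apply h (fun w => g w - W.MminusL x g w)
        calc _ = (W.p y x * g y) * (W.m y * W.MplusL x (fun w => g w - W.MminusL x g w) y) := by ring
          _ = _ := by
            rw [this, Finset.mul_sum]
            refine Finset.sum_congr rfl fun z _ => ?_
            rw [hS]; ring
      · simp [W.p_zero h]
    simp only [e1]
    rw [Finset.sum_comm]
    have e2 : W.m x * W.Down g x ^ 2 = ∑ z, W.Down g x * (W.m z * W.S z x g) := by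
      rw [← Finset.mul_sum, hD]; ring
    rw [e2, ← Finset.sum_sub_distrib]
    refine Finset.sum_congr rfl fun z _ => ?_
    rw [← Finset.mul_sum]
    change _ * W.S z x g = _
    by_cases hq : W.q z x = 0
    · simp [W.S_eq_zero hq, hq]
    · field_simp
  have h2 : ∑ y, W.m y * W.p y x * g y * (g y - W.MminusL x g y)
      = ∑ y, W.m y * W.p y x * g y ^ 2 - W.m x * W.Down g x ^ 2 := by
    have : W.m x * W.Down g x ^ 2 = W.Down g x * (W.m x * W.Down g x) := by ring
    rw [this, m_Down, Finset.mul_sum, ← Finset.sum_sub_distrib]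
    refine Finset.sum_congr rfl fun y _ => ?_
    by_cases h : x ⋖ y
    · rw [W.Mminus_apply h]; ring
    · rw [W.p_zero h]; ring
  rw [innerL_eq, ← h1, ← h2, Finset.mul_sum, ← Finset.sum_sub_distrib]
  refine Finset.sum_congr rfl fun y _ => ?_
  ring

lemma lemB1 {cxyz cdia : ℤ → ℝ} (h1 : W.UL1 cxyz) (h2 : W.UL2 cdia) (i : ℤ) (hi : 0 ≤ i)
    (hid : i < W.d) (z : P) (hz : W.rk z = i + 1) (g : P → ℝ) :
    ∑ x ∈ W.lvl (i-1), W.S z x g ^ 2 / W.q z x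
      = cdia i * W.Up g z ^ 2 + (cxyz i - cdia i) * ∑ y, W.p z y ^ 2 * g y ^ 2 := by
  have key : ∀ y y', (W.p z y * g y) * (W.p z y' * g y') *
      ∑ x ∈ W.lvl (i-1), W.p y x * W.p y' x / W.q z x
      = (W.p z y * g y) * (W.p z y' * g y') * (cdia i + if y = y' then cxyz i - cdia i else 0) := by
    intro y y'
    by_cases hy : y ⋖ z
    swap
    · simp [W.p_zero hy]
    by_cases hy' : y' ⋖ z
    swap
    · simp [W.p_zero hy']
    congr 1
    have r1 := W.rk_covBy _ _ hy
    have r2 := W.rk_covBy _ _ hy'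
    have e : ∑ x ∈ W.lvl (i-1), W.p y x * W.p y' x / W.q z x
        = ∑ x ∈ univ.filter (fun x => x ⋖ y ∧ x ⋖ y'), W.p y x * W.p y' x / W.chSum x z := by
      rw [lvl, Finset.sum_filter, Finset.sum_filter]
      refine Finset.sum_congr rfl fun x _ => ?_
      by_cases hx : x ⋖ y ∧ x ⋖ y'
      · have := W.rk_covBy _ _ hx.1
        rw [if_pos hx, if_pos (by omega), W.chSum_two (by omega)]
      · rw [if_neg hx]
        have : W.p y x * W.p y' x = 0 := by
          by_contra hne
          exact hx ⟨W.p_cov (left_ne_zero_of_mul hne), W.p_cov (right_ne_zero_of_mul hne)⟩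
        simp [this]
    rw [e]
    split_ifs with hyy
    · subst hyy
      have := h1 i hi hid y (by omega) z hy
      simp only [and_self]
      rw [add_sub_cancel, ← this]
      refine Finset.sum_congr rfl fun x _ => ?_
      rw [pow_two]
    · rw [h2 i hi hid y y' (by omega) (by omega) hyy z hy hy', add_zero]
  have e1 : ∑ x ∈ W.lvl (i-1), W.S z x g ^ 2 / W.q z x
      = ∑ y, ∑ y', (W.p z y * g y) * (W.p z y' * g y') *
      ∑ x ∈ W.lvl (i-1), W.p y x * W.p y' x / W.q z x := by
    simp only [Finset.mul_sum]
    rw [Finset.sum_congr rfl fun y _ => Finset.sum_comm, Finset.sum_comm]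
    refine Finset.sum_congr rfl fun x _ => ?_
    rw [pow_two, S, Finset.sum_mul_sum, Finset.sum_div]
    refine Finset.sum_congr rfl fun y _ => ?_
    rw [Finset.sum_div]
    refine Finset.sum_congr rfl fun y' _ => ?_
    ring
  rw [e1]
  simp only [key]
  simp only [mul_add, Finset.sum_add_distrib, mul_ite, mul_zero, Finset.sum_ite_eq, mem_univ, if_true]
  congr 1
  · rw [Up_apply, pow_two, Finset.sum_mul_sum, Finset.mul_sum]
    refine Finset.sum_congr rfl fun y _ => ?_
    rw [Finset.mul_sum]
    refine Finset.sum_congr rfl fun y' _ => ?_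
    ring
  · rw [Finset.mul_sum]
    refine Finset.sum_congr rfl fun y _ => ?_
    ring

/-- the local term -/
def T (a : ℝ) (i : ℤ) (g : P → ℝ) : ℝ := ∑ x ∈ W.lvl (i - 1), W.m x *
  W.innerL x 0 g (fun y => W.MplusL x (fun w => g w - W.MminusL x g w) y
                        - a * (g y - W.MminusL x g y))

lemma T_eq {cxyz cdia csqr : ℤ → ℝ} (h1 : W.UL1 cxyz) (h2 : W.UL2 cdia) (h3 : W.UL3 csqr)
    (a : ℝ) (i : ℤ) (hi : 0 ≤ i) (hid : i < W.d) (g : P → ℝ) :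
    W.T a i g = cdia i * W.normSqAt (i+1) (W.Up g)
      + (cxyz i - cdia i) * csqr i * W.normSqAt i g - W.normSqAt (i-1) (W.Down g)
      - a * (W.normSqAt i g - W.normSqAt (i-1) (W.Down g)) := by
  have hDn : W.normSqAt (i-1) (W.Down g) = ∑ x ∈ W.lvl (i-1), W.m x * W.Down g x ^ 2 := by
    unfold normSqAt innerAt
    exact Finset.sum_congr rfl fun x _ => by ring
  have hg : ∑ x ∈ W.lvl (i-1), ∑ y, W.m y * W.p y x * g y ^ 2 = W.normSqAt i g := by
    rw [Finset.sum_comm]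
    unfold normSqAt innerAt
    rw [← Finset.sum_subset (Finset.subset_univ (W.lvl i))]
    · refine Finset.sum_congr rfl fun y hy => ?_
      simp only [lvl, mem_filter, mem_univ, true_and] at hy
      have : ∑ x ∈ W.lvl (i-1), W.p y x = 1 := by
        rw [← W.p_sum' y (by omega)]
        refine Finset.sum_subset (Finset.subset_univ _) fun x _ hx => ?_
        simp only [lvl, mem_filter, mem_univ, true_and] at hx
        exact W.p_zero_rk (by omega)
      rw [← Finset.sum_mul, ← Finset.mul_sum, this]; ring
    · intro y _ hy
      refine Finset.sum_eq_zero fun x hx => ?_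
      simp only [lvl, mem_filter, mem_univ, true_and] at hx hy
      rw [W.p_zero_rk (by omega)]; ring
  have hU : ∑ x ∈ W.lvl (i-1), ∑ z, W.m z * (W.S z x g ^ 2 / W.q z x)
      = cdia i * W.normSqAt (i+1) (W.Up g) + (cxyz i - cdia i) * csqr i * W.normSqAt i g := by
    rw [Finset.sum_comm, ← Finset.sum_subset (Finset.subset_univ (W.lvl (i+1)))]
    · have e : ∀ z ∈ W.lvl (i+1), ∑ x ∈ W.lvl (i-1), W.m z * (W.S z x g ^ 2 / W.q z x)
          = cdia i * (W.m z * W.Up g z * W.Up g z)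
            + (cxyz i - cdia i) * ∑ y ∈ W.lvl i, g y ^ 2 * (W.m z * W.p z y ^ 2) := by
        intro z hz
        simp only [lvl, mem_filter, mem_univ, true_and] at hz
        rw [← Finset.mul_sum, W.lemB1 h1 h2 i hi hid z hz g,
          ← Finset.sum_subset (Finset.subset_univ (W.lvl i))]
        · have : ∑ y ∈ W.lvl i, g y ^ 2 * (W.m z * W.p z y ^ 2)
              = W.m z * ∑ y ∈ W.lvl i, W.p z y ^ 2 * g y ^ 2 := by
            rw [Finset.mul_sum]
            exact Finset.sum_congr rfl fun y _ => by ring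
          rw [this]; ring
        · intro y _ hy
          simp only [lvl, mem_filter, mem_univ, true_and] at hy
          rw [W.p_zero_rk (by omega)]; ring
      rw [Finset.sum_congr rfl e, Finset.sum_add_distrib, ← Finset.mul_sum, ← Finset.mul_sum,
        Finset.sum_comm]
      unfold normSqAt innerAt
      rw [mul_assoc (cxyz i - cdia i)]
      congr 2
      rw [Finset.mul_sum]
      refine Finset.sum_congr rfl fun y hy => ?_
      simp only [lvl, mem_filter, mem_univ, true_and] at hy
      have := h3 i hi hid y hy
      have e3 : ∑ z ∈ W.lvl (i+1), W.m z * W.p z y ^ 2 = csqr i * W.m y := by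
        rw [← this, lvl, Finset.sum_filter, Finset.sum_filter]
        refine Finset.sum_congr rfl fun z _ => ?_
        by_cases h : y ⋖ z
        · have := W.rk_covBy _ _ h
          rw [if_pos h, if_pos (by omega)]
        · simp [h, W.p_zero h]
      rw [← Finset.mul_sum, e3]; ring
    · intro z _ hz
      refine Finset.sum_eq_zero fun x hx => ?_
      simp only [lvl, mem_filter, mem_univ, true_and] at hx hz
      have : W.q z x = 0 := by
        refine Finset.sum_eq_zero fun y _ => ?_
        by_cases h : x ⋖ y
        · have := W.rk_covBy _ _ h
          rw [W.p_zero_rk (y := z) (x := y) (by omega)]; ring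
        · rw [W.p_zero h]; ring
      simp [this]
  have hA : ∀ x ∈ W.lvl (i-1), W.m x * W.innerL x 0 g
      (fun y => W.MplusL x (fun w => g w - W.MminusL x g w) y - a * (g y - W.MminusL x g y))
    = ∑ z, W.m z * (W.S z x g ^ 2 / W.q z x) - W.m x * W.Down g x ^ 2
      - a * (∑ y, W.m y * W.p y x * g y ^ 2 - W.m x * W.Down g x ^ 2) := by
    intro x hx
    simp only [lvl, mem_filter, mem_univ, true_and] at hx
    exact W.lemA x (by omega) a g
  rw [T, Finset.sum_congr rfl hA, Finset.sum_sub_distrib, Finset.sum_sub_distrib, ← Finset.mul_sum,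
    Finset.sum_sub_distrib, hU, hg, hDn]

lemma T_one (a : ℝ) (i : ℤ) (hid : i < W.d) : W.T a i (fun _ => 1) = 0 := by
  refine Finset.sum_eq_zero fun x hx => ?_
  simp only [lvl, mem_filter, mem_univ, true_and] at hx
  have hd := W.Down_one x (by omega)
  have hc : W.innerL x 0 (fun _ => 1) (fun y => W.MplusL x (fun w => 1 - W.MminusL x (fun _ => 1) w) y
      - a * (1 - W.MminusL x (fun _ => 1) y)) = 0 := by
    refine Finset.sum_eq_zero fun y hy => ?_
    simp only [linkLvl, mem_filter, mem_univ, true_and, add_zero] at hy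
    have hxy := W.covBy_of_rk hy.1 hy.2
    have h1 : W.MplusL x (fun w => 1 - W.MminusL x (fun _ => 1) w) y = 0 := by
      have := W.Mplus_apply hxy (fun w => 1 - W.MminusL x (fun _ => 1) w)
      rw [Finset.sum_eq_zero] at this
      · exact (mul_eq_zero.1 this).resolve_left (W.m_pos y).ne'
      · intro z _
        have : W.S z x (fun w => 1 - W.MminusL x (fun _ => 1) w) = 0 := by
          refine Finset.sum_eq_zero fun y' _ => ?_
          by_cases h : x ⋖ y'
          · beta_reduce; rw [W.Mminus_apply h, hd]; ring
          · rw [W.p_zero h]; ring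
        simp [this]
    beta_reduce; rw [h1, W.Mminus_apply hxy, hd]; ring
  rw [hc, mul_zero]

lemma norm_one_succ (i : ℤ) (hi : -1 ≤ i) (hid : i < W.d) :
    W.normSqAt i (fun _ => 1) = W.normSqAt (i+1) (fun _ => 1) := by
  unfold normSqAt
  rw [← W.inner_Down_one i hi]
  exact W.inner_congr (fun x hx => (W.Down_one x (by omega)).symm) fun _ _ => rfl

lemma const_eq {cxyz cdia csqr : ℤ → ℝ} (h1 : W.UL1 cxyz) (h2 : W.UL2 cdia) (h3 : W.UL3 csqr)
    (i : ℤ) (hi : 0 ≤ i) (hid : i < W.d) (g : P → ℝ) :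
    (cxyz i - cdia i) * csqr i * W.normSqAt i g = (1 - cdia i) * W.normSqAt i g := by
  rcases (W.lvl i).eq_empty_or_nonempty with he | hne
  · simp [normSqAt, innerAt, he]
  have hpos : 0 < W.normSqAt i (fun _ => 1) := by
    unfold normSqAt innerAt
    exact Finset.sum_pos (fun x _ => by simpa using W.m_pos x) hne
  have e := W.T_eq h1 h2 h3 0 i hi hid (fun _ => 1)
  rw [W.T_one 0 i hid] at e
  have e1 : W.normSqAt (i+1) (W.Up fun _ => 1) = W.normSqAt i (fun _ => 1) := by
    rw [W.norm_one_succ i (by omega) hid]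
    exact W.inner_congr (fun x hx => W.Up_one x (by omega)) (fun x hx => W.Up_one x (by omega))
  have e2 : W.normSqAt (i-1) (W.Down fun _ => 1) = W.normSqAt i (fun _ => 1) := by
    have := W.norm_one_succ (i-1) (by omega) (by omega)
    rw [sub_add_cancel] at this
    rw [← this]
    exact W.inner_congr (fun x hx => W.Down_one x (by omega)) (fun x hx => W.Down_one x (by omega))
  rw [e1, e2] at e
  have : (cxyz i - cdia i) * csqr i = 1 - cdia i := by
    apply mul_right_cancel₀ hpos.ne'
    linarith
  rw [this]

lemma norm_smul (i : ℤ) (c : ℝ) (g : P → ℝ) :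
    W.normSqAt i (fun x => c * g x) = c ^ 2 * W.normSqAt i g := by
  unfold normSqAt innerAt
  rw [Finset.mul_sum]
  exact Finset.sum_congr rfl fun x _ => by ring

lemma inner_smul (i : ℤ) (c : ℝ) (g h : P → ℝ) :
    W.innerAt i (fun x => c * g x) h = c * W.innerAt i g h := by
  unfold innerAt
  rw [Finset.mul_sum]
  exact Finset.sum_congr rfl fun x _ => by ring

lemma Up_smul (c : ℝ) (g : P → ℝ) : W.Up (fun x => c * g x) = fun y => c * W.Up g y := by
  funext y
  rw [Up_apply, Up_apply, Finset.mul_sum]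
  exact Finset.sum_congr rfl fun x _ => by ring

lemma norm_nonneg (i : ℤ) (g : P → ℝ) : 0 ≤ W.normSqAt i g := by
  unfold normSqAt innerAt
  refine Finset.sum_nonneg fun x _ => ?_
  rw [mul_assoc]
  exact mul_nonneg (W.m_pos x).le (mul_self_nonneg _)

lemma cs (i : ℤ) (f g : P → ℝ) : W.innerAt i f g ^ 2 ≤ W.normSqAt i f * W.normSqAt i g := by
  have := Finset.sum_mul_sq_le_sq_mul_sq (W.lvl i) (fun x => √(W.m x) * f x) (fun x => √(W.m x) * g x)
  have e : ∀ a b : P → ℝ, W.innerAt i a b = ∑ x ∈ W.lvl i, √(W.m x) * a x * (√(W.m x) * b x) := by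
    intro a b
    unfold innerAt
    refine Finset.sum_congr rfl fun x _ => ?_
    nth_rewrite 1 [← Real.mul_self_sqrt (W.m_pos x).le]; ring
  unfold normSqAt
  simp only [e]
  simpa only [pow_two] using this

lemma step_down (i : ℤ) (hi : 0 ≤ i) (g : P → ℝ) (hg : W.innerAt (i+1) g (fun _ => 1) = 0) :
    ∃ g' : P → ℝ, W.innerAt i g' (fun _ => 1) = 0 ∧
      W.normSqAt (i+1) (W.Up g') = W.normSqAt i (W.Down g) ∧
      W.normSqAt i g' ≤ W.normSqAt (i+1) g := by
  set A := W.normSqAt i (W.Down g) with hA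
  set B := W.normSqAt (i+1) (W.Up (W.Down g)) with hB
  have hA0 : 0 ≤ A := W.norm_nonneg _ _
  have hB0 : 0 ≤ B := W.norm_nonneg _ _
  have hAB : A ^ 2 ≤ W.normSqAt (i+1) g * B := by
    have h : A = W.innerAt (i+1) g (W.Up (W.Down g)) := by
      rw [← adj]; rfl
    rw [h]
    exact W.cs _ _ _
  refine ⟨fun x => √(A / B) * W.Down g x, ?_, ?_, ?_⟩
  · rw [inner_smul, W.inner_Down_one i (by omega), hg, mul_zero]
  · rw [Up_smul, norm_smul, Real.sq_sqrt (by positivity), ← hB]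
    by_cases h : B = 0
    · rw [h] at hAB
      have : A = 0 := by nlinarith
      simp [this]
    · field_simp
  · rw [norm_smul, Real.sq_sqrt (by positivity), ← hA]
    by_cases h : B = 0
    · rw [h]; simpa using W.norm_nonneg _ _
    · have : 0 < B := lt_of_le_of_ne hB0 (Ne.symm h)
      rw [div_mul_eq_mul_div, div_le_iff₀ this]
      linarith [pow_two A]

lemma h_exists (i : ℤ) (g : P → ℝ) (hg : W.innerAt i g (fun _ => 1) = 0) (t : ℝ) (ht : 0 ≤ t)
    (ht' : t ≤ W.normSqAt i g) :
    ∃ h : P → ℝ, W.innerAt i h (fun _ => 1) = 0 ∧ W.normSqAt i h = t := by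
  have h0 := W.norm_nonneg i g
  refine ⟨fun x => √(t / W.normSqAt i g) * g x, ?_, ?_⟩
  · rw [inner_smul, hg, mul_zero]
  · rw [norm_smul, Real.sq_sqrt (by positivity)]
    by_cases h : W.normSqAt i g = 0
    · rw [h]; simp; linarith
    · field_simp

lemma down_zero (g : P → ℝ) (hg : W.innerAt 0 g (fun _ => 1) = 0) :
    W.normSqAt (-1) (W.Down g) = 0 := by
  have h := W.inner_Down_one (-1) le_rfl g
  rw [neg_add_cancel, hg] at h
  obtain ⟨b, hb, hu⟩ := W.bot_unique
  have hl : W.lvl (-1) = {b} := by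
    ext x
    simp only [lvl, mem_filter, mem_univ, true_and, mem_singleton]
    exact ⟨fun hx => hu x hx, fun hx => hx ▸ hb⟩
  unfold normSqAt
  unfold innerAt at h ⊢
  rw [hl, Finset.sum_singleton] at h ⊢
  rw [mul_one] at h
  rw [h, zero_mul]

lemma Up_norm {cxyz cdia csqr : ℤ → ℝ} (h1 : W.UL1 cxyz) (h2 : W.UL2 cdia) (h3 : W.UL3 csqr)
    (a : ℝ) (i : ℤ) (hi : 0 ≤ i) (hid : i < W.d) (hc : 0 < cdia i) (g : P → ℝ) :
    W.normSqAt (i+1) (W.Up g) = W.normSqAt i g + (1 / cdia i) * W.T a i g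
      - (1 - a) / cdia i * (W.normSqAt i g - W.normSqAt (i-1) (W.Down g)) := by
  have e := W.T_eq h1 h2 h3 a i hi hid g
  rw [W.const_eq h1 h2 h3 i hi hid g] at e
  rw [e]
  field_simp
  ring

lemma main_nat {cxyz cdia csqr : ℤ → ℝ} (h1 : W.UL1 cxyz) (h2 : W.UL2 cdia) (h3 : W.UL3 csqr)
    (hdia : ∀ j : ℤ, 0 ≤ j → j ≤ W.d - 1 → 0 < cdia j) (α : ℤ → ℝ) (n : ℕ) :
    ∀ (f : P → ℝ), (n : ℤ) ≤ W.d - 1 → W.innerAt n f (fun _ => 1) = 0 →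
    ∃ g h : ℤ → P → ℝ,
      (∀ j : ℤ, 0 ≤ j → j ≤ n →
        W.innerAt j (g j) (fun _ => 1) = 0 ∧ W.innerAt j (h j) (fun _ => 1) = 0) ∧
      (g n = f) ∧
      (∀ j : ℤ, 0 ≤ j → j ≤ n →
        W.normSqAt j (g j) = ∑ i ∈ Finset.Icc 0 j, W.normSqAt i (h i)) ∧
      (∀ j : ℤ, 0 ≤ j → j ≤ n →
        W.normSqAt (j + 1) (W.Up (g j))
          = ∑ i ∈ Finset.Icc 0 j,
              (1 - ∏ t ∈ Finset.Icc i j, (1 - α t) / cdia t) * W.normSqAt i (h i)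
            + ∑ i ∈ Finset.Icc 0 j,
                ((1 / cdia i) * ∏ t ∈ Finset.Icc (i + 1) j, (1 - α t) / cdia t) *
                  W.T (α i) i (g i)) := by
  induction n with
  | zero =>
    intro f hd hf
    simp only [Nat.cast_zero] at *
    refine ⟨fun _ => f, fun _ => f, ?_, rfl, ?_, ?_⟩
    · intro j hj hj'
      obtain rfl : j = 0 := by omega
      exact ⟨hf, hf⟩
    · intro j hj hj'
      obtain rfl : j = 0 := by omega
      simp
    · intro j hj hj'
      obtain rfl : j = 0 := by omega
      rw [W.Up_norm h1 h2 h3 (α 0) 0 le_rfl (by omega) (hdia 0 le_rfl hd), zero_sub,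
        W.down_zero f hf]
      simp
      ring
  | succ n ih =>
    intro f hd hf
    push_cast at *
    obtain ⟨g', hg1, hg2, hg3⟩ := W.step_down n (by omega) f hf
    obtain ⟨g, h, H1, H2, H3, H4⟩ := ih g' (by omega) hg1
    obtain ⟨h', hh1, hh2⟩ := W.h_exists (n+1) f hf (W.normSqAt (n+1) f - W.normSqAt n g')
      (by linarith) (by linarith [W.norm_nonneg n g'])
    have ne : ∀ j : ℤ, j ≤ n → j ≠ n + 1 := by intro j hj; omega
    have ins : Finset.Icc (0:ℤ) (n+1) = insert ((n:ℤ)+1) (Finset.Icc 0 (n:ℤ)) := by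
      ext x; simp only [mem_insert, mem_Icc]; omega
    have nin : ((n:ℤ)+1) ∉ Finset.Icc (0:ℤ) n := by simp
    have ins' : ∀ i : ℤ, i ≤ n + 1 → Finset.Icc i ((n:ℤ)+1) = insert ((n:ℤ)+1) (Finset.Icc i (n:ℤ)) := by
      intro i hi
      ext x; simp only [mem_insert, mem_Icc]; omega
    have nin' : ∀ i : ℤ, ((n:ℤ)+1) ∉ Finset.Icc i (n:ℤ) := by intro i; simp
    refine ⟨Function.update g (n+1) f, Function.update h (n+1) h', ?_, ?_, ?_, ?_⟩
    · intro j hj hj'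
      rcases eq_or_ne j (n+1) with rfl | hne
      · simp [hf, hh1]
      · simp only [Function.update_of_ne hne]
        exact H1 j hj (by omega)
    · simp
    · intro j hj hj'
      rcases eq_or_ne j (n+1) with rfl | hne
      · rw [ins, Finset.sum_insert nin, Function.update_self, Function.update_self, hh2]
        rw [Finset.sum_congr rfl (g := fun i => W.normSqAt i (h i)), ← H3 n (by omega) le_rfl, H2]
        · ring
        · intro i hi
          rw [Function.update_of_ne (ne i (mem_Icc.1 hi).2)]
      · rw [Function.update_of_ne hne, H3 j hj (by omega)]
        refine Finset.sum_congr rfl fun i hi => ?_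
        have := mem_Icc.1 hi
        rw [Function.update_of_ne (ne i (by omega))]
    · intro j hj hj'
      rcases eq_or_ne j (n+1) with rfl | hne
      · have E := H4 n (by omega) le_rfl
        have E3 := H3 n (by omega) le_rfl
        rw [H2] at E E3
        rw [ins, Finset.sum_insert nin, Finset.sum_insert nin]
        simp only [Function.update_self]
        set r := (1 - α (n+1)) / cdia (n+1) with hr
        have s1 : ∑ i ∈ Finset.Icc 0 (n:ℤ),
              (1 - ∏ t ∈ Finset.Icc i ((n:ℤ)+1), (1 - α t) / cdia t) *
                W.normSqAt i (Function.update h (n+1) h' i)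
            = (1 - r) * W.normSqAt n g' + r * ∑ i ∈ Finset.Icc 0 (n:ℤ),
              (1 - ∏ t ∈ Finset.Icc i (n:ℤ), (1 - α t) / cdia t) * W.normSqAt i (h i) := by
          rw [E3, Finset.mul_sum, Finset.mul_sum, ← Finset.sum_add_distrib]
          refine Finset.sum_congr rfl fun i hi => ?_
          have := mem_Icc.1 hi
          rw [Function.update_of_ne (ne i (by omega)), ins' i (by omega),
            Finset.prod_insert (nin' i)]
          ring
        have s2 : ∑ i ∈ Finset.Icc 0 (n:ℤ),
                ((1 / cdia i) * ∏ t ∈ Finset.Icc (i + 1) ((n:ℤ)+1), (1 - α t) / cdia t) *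
                  W.T (α i) i (Function.update g (n+1) f i)
            = r * ∑ i ∈ Finset.Icc 0 (n:ℤ),
                ((1 / cdia i) * ∏ t ∈ Finset.Icc (i + 1) (n:ℤ), (1 - α t) / cdia t) *
                  W.T (α i) i (g i) := by
          rw [Finset.mul_sum]
          refine Finset.sum_congr rfl fun i hi => ?_
          have := mem_Icc.1 hi
          rw [Function.update_of_ne (ne i (by omega)), ins' (i+1) (by omega),
            Finset.prod_insert (nin' (i+1))]
          ring
        rw [s1, s2, W.Up_norm h1 h2 h3 (α (n+1)) (n+1) (by omega) (by omega)
          (hdia _ (by omega) hd), add_sub_cancel_right, ← hg2, E, hh2, Finset.Icc_self,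
          Finset.prod_singleton, Finset.Icc_eq_empty (a := (n:ℤ)+1+1) (b := (n:ℤ)+1) (by omega), Finset.prod_empty, ← hr]
        ring
      · rw [Function.update_of_ne hne, H4 j hj (by omega)]
        congr 1
        · refine Finset.sum_congr rfl fun i hi => ?_
          have := mem_Icc.1 hi
          rw [Function.update_of_ne (ne i (by omega))]
        · refine Finset.sum_congr rfl fun i hi => ?_
          have := mem_Icc.1 hi
          rw [Function.update_of_ne (ne i (by omega))]

end WGP

/-- the decomposition of functions orthogonal to constants under
Property UL. -/
theorem stmt8 {P : Type} [Fintype P] [PartialOrder P] (W : WGP P)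
    (cxyz cdia csqr : ℤ → ℝ)
    (h1 : W.UL1 cxyz) (h2 : W.UL2 cdia) (h3 : W.UL3 csqr)
    (hdia : ∀ j : ℤ, 0 ≤ j → j ≤ W.d - 1 → 0 < cdia j)
    (α : ℤ → ℝ)
    (k : ℤ) (hk0 : 0 ≤ k) (hkd : k ≤ W.d - 1)
    (f : P → ℝ) (hf : W.innerAt k f (fun _ => 1) = 0) :
    ∃ g h : ℤ → P → ℝ,
      (∀ j : ℤ, 0 ≤ j → j ≤ k →
        W.innerAt j (g j) (fun _ => 1) = 0 ∧ W.innerAt j (h j) (fun _ => 1) = 0) ∧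
      (∀ x : P, W.rk x = k → g k x = f x) ∧
      (∀ j : ℤ, 0 ≤ j → j ≤ k →
        W.normSqAt j (g j) = ∑ i ∈ Finset.Icc 0 j, W.normSqAt i (h i)) ∧
      (∀ j : ℤ, 0 ≤ j → j ≤ k →
        W.normSqAt (j + 1) (W.Up (g j))
          = ∑ i ∈ Finset.Icc 0 j,
              (1 - ∏ t ∈ Finset.Icc i j, (1 - α t) / cdia t) * W.normSqAt i (h i)
            + ∑ i ∈ Finset.Icc 0 j,
                ((1 / cdia i) * ∏ t ∈ Finset.Icc (i + 1) j, (1 - α t) / cdia t) *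
                  ∑ x ∈ W.lvl (i - 1), W.m x *
                    W.innerL x 0 (g i)
                      (fun y => W.MplusL x (fun w => g i w - W.MminusL x (g i) w) y
                        - α i * (g i y - W.MminusL x (g i) y))) := by
  obtain ⟨n, rfl⟩ := Int.eq_ofNat_of_zero_le hk0
  obtain ⟨g, h, H1, H2, H3, H4⟩ := W.main_nat h1 h2 h3 hdia α n f hkd hf
  exact ⟨g, h, H1, fun x _ => congrFun H2 x, H3, H4⟩
end
end

section
/- Let P be a finite pure weighted graded poset of rank d with a standard weight scheme, in which every element of positive rank covers at least two elements, and suppose P possesses Property AL. For a self-adjoint operator M with eigenvalues λ_1 ≥ λ_2 ≥ … ≥ λ_n, write λ(M) = max{λ_2, |λ_n|}. If there exists λ ≥ 0 such that λ(A_x) ≤ λ for every x ∈ P of rank at most d−2, then for every 0 ≤ l ≤ d−1, in operator norm: ‖A_l − U_{l−1}D_l‖ ≤ λ. -/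
open Finset

attribute [local instance] Classical.propDecidable

noncomputable section

namespace S12

theorem herm_bound {Y : Type} [Fintype Y] [DecidableEq Y] (B : Matrix Y Y ℝ) (hB : B.IsHermitian)
    (lam : ℝ) 
    (h : ∀ (c : ℝ) (u : Y → ℝ), u ≠ 0 → B.mulVec u = c • u → |c| ≤ lam) (g : Y → ℝ) :
    ∑ y, (B.mulVec g y)^2 ≤ lam^2 * ∑ y, (g y)^2 := by
  have hev : ∀ i, |hB.eigenvalues i| ≤ lam := by
    intro i
    refine h _ (hB.eigenvectorBasis i).ofLp ?_ (hB.mulVec_eigenvectorBasis i)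
    intro h0
    have := hB.eigenvectorBasis.orthonormal.ne_zero i
    apply this
    ext y
    exact congrFun h0 y
  have key : ∀ i, inner ℝ (hB.eigenvectorBasis i) (WithLp.toLp 2 (B.mulVec g))
      = hB.eigenvalues i * inner ℝ (hB.eigenvectorBasis i) (WithLp.toLp 2 g) := by
    intro i
    have h1 := hB.mulVec_eigenvectorBasis i
    have h2 : inner ℝ (hB.eigenvectorBasis i) (WithLp.toLp 2 (B.mulVec g))
       = (B.mulVec g) ⬝ᵥ (hB.eigenvectorBasis i).ofLp := by
      simp [EuclideanSpace.inner_eq_star_dotProduct]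
    have h3 : inner ℝ (hB.eigenvectorBasis i) (WithLp.toLp 2 g)
       = g ⬝ᵥ (hB.eigenvectorBasis i).ofLp := by
      simp [EuclideanSpace.inner_eq_star_dotProduct]
    have hT : B.transpose = B := by
      have := hB.eq
      rwa [Matrix.conjTranspose_eq_transpose_of_trivial] at this
    rw [h2, h3, dotProduct_comm, Matrix.dotProduct_mulVec, ← Matrix.mulVec_transpose, hT, h1,
      smul_dotProduct, dotProduct_comm, smul_eq_mul]
  have e1 := hB.eigenvectorBasis.sum_sq_norm_inner_right (WithLp.toLp 2 (B.mulVec g))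
  have e2 := hB.eigenvectorBasis.sum_sq_norm_inner_right (WithLp.toLp 2 g)
  rw [EuclideanSpace.norm_sq_eq] at e1 e2
  simp only [Real.norm_eq_abs, sq_abs] at e1 e2
  rw [← e1, ← e2, Finset.mul_sum]
  refine Finset.sum_le_sum fun i _ => ?_
  rw [key, mul_pow]
  have := sq_le_sq' (neg_le_of_abs_le (hev i)) (le_of_abs_le (hev i))
  nlinarith [sq_nonneg (inner ℝ (hB.eigenvectorBasis i) (WithLp.toLp 2 g))]

theorem local_bound {Y : Type} [Fintype Y] [DecidableEq Y] (A : Matrix Y Y ℝ) (μ : Y → ℝ) (hμ : ∀ y, 0 < μ y)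
    (hμ1 : ∑ y, μ y = 1) (hA0 : ∀ y w, 0 ≤ A y w) (hA1 : ∀ y, ∑ w, A y w = 1)
    (hs : ∀ y w, μ y * A y w = μ w * A w y) (lam : ℝ) (hlam : 0 ≤ lam)
    (hbd : lamBd A.mulVecLin lam) (f : Y → ℝ) :
    ∑ y, μ y * (∑ w, A y w * f w - ∑ w, μ w * f w)^2 ≤ lam^2 * ∑ y, μ y * (f y)^2 := by
  have hr : ∀ y, 0 < √(μ y) := fun y => Real.sqrt_pos.2 (hμ y)
  have hrr : ∀ y, √(μ y) * √(μ y) = μ y := fun y => Real.mul_self_sqrt (hμ y).le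
  set B : Matrix Y Y ℝ := Matrix.of fun y w => √(μ y) * (A y w - μ w) / √(μ w) with hBdef
  have hBmul : ∀ (f : Y → ℝ) y, B.mulVec (fun w => √(μ w) * f w) y
      = √(μ y) * (∑ w, A y w * f w - ∑ w, μ w * f w) := by
    intro f y
    simp only [Matrix.mulVec, dotProduct, hBdef, Matrix.of_apply]
    rw [← Finset.sum_sub_distrib, Finset.mul_sum]
    refine Finset.sum_congr rfl fun w _ => ?_
    have := (hr w).ne'
    field_simp
  have hB : B.IsHermitian := by
    ext y w
    simp only [Matrix.conjTranspose_apply, hBdef, Matrix.of_apply, star_trivial]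
    have h1 := (hr w).ne'
    have h2 := (hr y).ne'
    have h3 := hs y w
    rw [div_eq_div_iff h2 h1]
    have e1 := hrr y
    have e2 := hrr w
    have : √(μ w) * (A w y - μ y) * √(μ w) = (√(μ w) * √(μ w)) * (A w y - μ y) := by ring
    rw [this]
    have : √(μ y) * (A y w - μ w) * √(μ y) = (√(μ y) * √(μ y)) * (A y w - μ w) := by ring
    rw [this, e1, e2]
    linarith
  have hev : ∀ (c : ℝ) (u : Y → ℝ), u ≠ 0 → B.mulVec u = c • u → |c| ≤ lam := by
    intro c u hu hc
    by_cases hc0 : c = 0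
    · simpa [hc0] using hlam
    set v : Y → ℝ := fun w => u w / √(μ w) with hv
    have huv : u = fun w => √(μ w) * v w := by
      ext w; simp only [hv]; field_simp [(hr w).ne']
    have hv0 : v ≠ 0 := by
      rintro h0
      apply hu; rw [huv, h0]; ext; simp
    have h1 : ∀ y, ∑ w, A y w * v w - ∑ w, μ w * v w = c * v y := by
      intro y
      have := congrFun hc y
      rw [huv, hBmul] at this
      simp only [Pi.smul_apply, smul_eq_mul] at this
      have h2 := (hr y).ne'
      apply mul_left_cancel₀ h2
      rw [this]; ring
    have hcol : ∑ y, μ y * ∑ w, A y w * v w = ∑ w, μ w * v w := by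
      simp only [Finset.mul_sum]
      rw [Finset.sum_comm]
      refine Finset.sum_congr rfl fun w _ => ?_
      have : ∀ y, μ y * (A y w * v w) = (μ w * v w) * A w y := by
        intro y; rw [← mul_assoc, hs]; ring
      simp only [this]
      rw [← Finset.mul_sum, hA1, mul_one]
    have horth : ∑ w, μ w * v w = 0 := by
      have h2 : ∑ y, μ y * (∑ w, A y w * v w - ∑ w, μ w * v w) = ∑ y, μ y * (c * v y) :=
        Finset.sum_congr rfl fun y _ => by rw [h1]
      simp only [mul_sub, Finset.sum_sub_distrib] at h2
      rw [hcol, ← Finset.sum_mul, hμ1, one_mul, sub_self] at h2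
      have h3 : ∑ y, μ y * (c * v y) = c * ∑ y, μ y * v y := by
        rw [Finset.mul_sum]; exact Finset.sum_congr rfl fun y _ => by ring
      rw [h3] at h2
      rcases mul_eq_zero.1 h2.symm with h | h
      · exact absurd h hc0
      · exact h
    have hAv : A.mulVecLin v = c • v := by
      ext y
      have := h1 y
      rw [horth, sub_zero] at this
      simpa [Matrix.mulVec, dotProduct] using this
    have hAone : A.mulVecLin (fun _ => (1:ℝ)) = (1:ℝ) • (fun _ => (1:ℝ)) := by
      ext y
      simpa [Matrix.mulVec, dotProduct] using hA1 y
    have hmem : v ∈ Module.End.eigenspace A.mulVecLin c := Module.End.mem_eigenspace_iff.2 hAv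
    have hmem1 : (fun _ => (1:ℝ)) ∈ Module.End.eigenspace A.mulVecLin 1 :=
      Module.End.mem_eigenspace_iff.2 hAone
    obtain ⟨y0, hy0⟩ : ∃ y, v y ≠ 0 := by
      by_contra! h; exact hv0 (funext h)
    have hone0 : (fun _ : Y => (1:ℝ)) ≠ 0 := fun h => one_ne_zero (congrFun h y0)
    have hlow : -lam ≤ c := hbd.2 c (Module.End.hasEigenvalue_of_hasEigenvector ⟨hmem, hv0⟩)
    rw [abs_le]
    refine ⟨hlow, ?_⟩
    by_contra! hcl
    have hle1 : c ≤ 1 := by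
      obtain ⟨y, -, hy⟩ := Finset.exists_max_image Finset.univ (fun y => |v y|) ⟨y0, Finset.mem_univ _⟩
      have hpos : 0 < |v y| := lt_of_lt_of_le (abs_pos.2 hy0) (hy y0 (Finset.mem_univ _))
      have h2 := h1 y
      rw [horth, sub_zero] at h2
      have h3 : |c * v y| ≤ |v y| := by
        rw [← h2]
        calc |∑ w, A y w * v w| ≤ ∑ w, |A y w * v w| := Finset.abs_sum_le_sum_abs _ _
          _ ≤ ∑ w, A y w * |v y| := by
            refine Finset.sum_le_sum fun w _ => ?_
            rw [abs_mul, abs_of_nonneg (hA0 y w)]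
            exact mul_le_mul_of_nonneg_left (hy w (Finset.mem_univ _)) (hA0 y w)
          _ = |v y| := by rw [← Finset.sum_mul, hA1, one_mul]
      rw [abs_mul] at h3
      have : |c| ≤ 1 := by
        by_contra! h
        nlinarith
      exact (le_abs_self c).trans this
    by_cases hc1 : c = 1
    · have hb := hbd.1 {1} (by intro x hx; rw [Finset.mem_singleton] at hx; rw [hx, ← hc1]; exact hcl)
      rw [Finset.sum_singleton] at hb
      rw [hc1] at hmem
      rw [finrank_le_one_iff] at hb
      obtain ⟨e, he⟩ := hb
      obtain ⟨a, ha⟩ := he ⟨_, hmem⟩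
      obtain ⟨b, hb⟩ := he ⟨_, hmem1⟩
      have ha' : ∀ y, a * (e : Y → ℝ) y = v y := fun y => congrFun (congrArg Subtype.val ha) y
      have hb' : ∀ y, b * (e : Y → ℝ) y = 1 := fun y => congrFun (congrArg Subtype.val hb) y
      have h5 : ∀ y, b * v y = a := by
        intro y; rw [← ha', mul_left_comm, hb', mul_one]
      have h6 : a = 0 := by
        have : b * ∑ w, μ w * v w = a := by
          rw [Finset.mul_sum]
          calc ∑ w, b * (μ w * v w) = ∑ w, μ w * a :=
                Finset.sum_congr rfl fun w _ => by rw [← h5 w]; ring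
            _ = a := by rw [← Finset.sum_mul, hμ1, one_mul]
        rw [← this, horth, mul_zero]
      apply hy0
      rw [← ha', h6, zero_mul]
    · have hb := hbd.1 {c, 1} (by
        intro x hx
        simp only [Finset.mem_insert, Finset.mem_singleton] at hx
        rcases hx with rfl | rfl
        · exact hcl
        · exact hcl.trans_le hle1)
      rw [Finset.sum_pair hc1] at hb
      have p1 : 0 < Module.finrank ℝ (Module.End.eigenspace A.mulVecLin c) := by
        apply Module.finrank_pos_iff_exists_ne_zero.2
        exact ⟨⟨v, hmem⟩, fun h => hv0 (congrArg Subtype.val h)⟩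
      have p2 : 0 < Module.finrank ℝ (Module.End.eigenspace A.mulVecLin 1) := by
        apply Module.finrank_pos_iff_exists_ne_zero.2
        exact ⟨⟨_, hmem1⟩, fun h => hone0 (congrArg Subtype.val h)⟩
      omega
  have hfin := herm_bound B hB lam hev (fun w => √(μ w) * f w)
  simp only [hBmul, mul_pow, Real.sq_sqrt (hμ _).le] at hfin
  exact hfin

variable {P : Type} [Fintype P] [PartialOrder P] (W : WGP P)

theorem p0 {x y : P} (h : ¬ x ⋖ y) : W.p y x = 0 := by
  by_contra h0
  exact h ((W.p_pos_iff y x).1 (lt_of_le_of_ne (W.p_nonneg y x) (Ne.symm h0)))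

theorem pcov {x y : P} (h : W.p y x ≠ 0) : x ⋖ y := by
  by_contra h0
  exact h (p0 W h0)

theorem psum {y : P} (h : 0 ≤ W.rk y) : ∑ x, W.p y x = 1 := by
  rw [← W.p_sum y h, Finset.sum_filter]
  refine Finset.sum_congr rfl fun x _ => ?_
  split_ifs with h
  · rfl
  · exact p0 W h

theorem msum {x : P} (h : W.rk x < W.d) : ∑ y, W.p y x * W.m y = W.m x := by
  rw [W.m_eq x h, Finset.sum_filter]
  refine Finset.sum_congr rfl fun y _ => ?_
  split_ifs with h
  · rfl
  · rw [p0 W h, zero_mul]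

def Q (s z : P) : ℝ := ∑ y, W.p z y * W.p y s

theorem ch1 {s y : P} (h : s ⋖ y) : W.chSum s y = W.p y s := by
  have : (W.rk y - W.rk s).toNat = 1 := by rw [W.rk_covBy _ _ h]; simp
  simp [WGP.chSum, this, WGP.upMat]

theorem ch2 {s y z : P} (h : s ⋖ y) (h' : y ⋖ z) : W.chSum s z = Q W s z := by
  have : (W.rk z - W.rk s).toNat = 2 := by
    rw [W.rk_covBy _ _ h', W.rk_covBy _ _ h]
    omega
  simp [WGP.chSum, this, WGP.upMat, pow_two, Matrix.mul_apply, Q]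

theorem Q_ge (s y z : P) : W.p z y * W.p y s ≤ Q W s z :=
  Finset.single_le_sum (f := fun y => W.p z y * W.p y s)
    (fun y _ => mul_nonneg (W.p_nonneg _ _) (W.p_nonneg _ _)) (Finset.mem_univ y)

theorem Q_sub (s y z : P) :
    Q W s z - W.p z y * W.p y s = ∑ w, if w = y then 0 else W.p z w * W.p w s := by
  rw [Q, ← Finset.sum_erase_eq_sub (Finset.mem_univ y), ← Finset.filter_ne', Finset.sum_filter]
  refine Finset.sum_congr rfl fun w _ => ?_
  by_cases h : w = y <;> simp [h]

theorem Q_gt {s y w z : P} (hwy : w ≠ y) (h1 : s ⋖ w) (h2 : w ⋖ z) :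
    0 < Q W s z - W.p z y * W.p y s := by
  rw [Q_sub]
  have hp : 0 < W.p z w * W.p w s :=
    mul_pos ((W.p_pos_iff _ _).2 h2) ((W.p_pos_iff _ _).2 h1)
  refine lt_of_lt_of_le hp ?_
  have := Finset.single_le_sum (f := fun w => if w = y then 0 else W.p z w * W.p w s)
    (fun u _ => by
      split_ifs
      · exact le_rfl
      · exact mul_nonneg (W.p_nonneg _ _) (W.p_nonneg _ _)) (Finset.mem_univ w)
  simpa [hwy] using this

theorem AL' (hAL : W.AL) {x w : P} (h0 : 0 ≤ W.rk x) (h1 : W.rk x ≤ W.d - 1) (hne : x ≠ w) :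
    ∑ z, W.m z * W.p z x * W.p z w / (1 - W.p z x) =
    ∑ z, W.m z * W.p z x * W.p z w *
      ∑ s, W.p x s * W.p w s / (Q W s z - W.p z x * W.p x s) := by
  by_cases hr : W.rk w = W.rk x
  · have h := hAL (W.rk x) h0 h1 x w rfl hr hne
    rw [Finset.sum_filter, Finset.sum_filter] at h
    convert h using 2 with z _ z _
    · split_ifs with hc
      · rfl
      · rw [not_and_or] at hc
        rcases hc with hc | hc <;> simp [p0 W hc]
    · split_ifs with hc
      · congr 1
        rw [Finset.sum_filter]
        refine Finset.sum_congr rfl fun s _ => ?_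
        split_ifs with hs
        · rw [ch2 W hs.1 hc.1]
        · rw [not_and_or] at hs
          rcases hs with hs | hs <;> simp [p0 W hs]
      · rw [not_and_or] at hc
        rcases hc with hc | hc <;> simp [p0 W hc]
  · have hz : ∀ z, W.p z x * W.p z w = 0 := by
      intro z
      by_contra h
      have a := W.rk_covBy _ _ (pcov W (left_ne_zero_of_mul h))
      have b := W.rk_covBy _ _ (pcov W (right_ne_zero_of_mul h))
      omega
    rw [Finset.sum_eq_zero, Finset.sum_eq_zero]
    · intro z _; rw [mul_assoc (W.m z), hz]; simp
    · intro z _; rw [mul_assoc (W.m z), hz]; simp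

theorem p_lt (hstd : W.Standard)
    (hcov : ∀ y : P, 1 ≤ W.rk y → 2 ≤ (Finset.univ.filter (fun z => z ⋖ y)).card)
    {x z : P} (h0 : 0 ≤ W.rk x) (h : x ⋖ z) : W.p z x < 1 := by
  rw [hstd z x h]
  have : 2 ≤ (Finset.univ.filter (fun t => t ⋖ z)).card :=
    hcov z (by rw [W.rk_covBy _ _ h]; omega)
  have : (2:ℝ) ≤ (Finset.univ.filter (fun t => t ⋖ z)).card := by exact_mod_cast this
  rw [div_lt_one (by linarith)]
  linarith

theorem nondeg (hstd : W.Standard)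
    (hcov : ∀ y : P, 1 ≤ W.rk y → 2 ≤ (Finset.univ.filter (fun z => z ⋖ y)).card)
    (hAL : W.AL) {x : P} (h0 : 0 ≤ W.rk x) (h1 : W.rk x ≤ W.d - 1) {s z : P}
    (hs : s ⋖ x) (hz : x ⋖ z) : Q W s z - W.p z x * W.p x s ≠ 0 := by
  have hsum : ∑ w, (if w = x then 0 else ∑ z, W.m z * W.p z x * W.p z w / (1 - W.p z x)) =
     ∑ w, (if w = x then 0 else ∑ z, W.m z * W.p z x * W.p z w *
      ∑ s, W.p x s * W.p w s / (Q W s z - W.p z x * W.p x s)) := by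
    refine Finset.sum_congr rfl fun w _ => ?_
    split_ifs with h
    · rfl
    · exact AL' W hAL h0 h1 (Ne.symm h)
  have hL : ∑ w, (if w = x then 0 else ∑ z, W.m z * W.p z x * W.p z w / (1 - W.p z x)) =
      ∑ z, W.m z * W.p z x * ∑ s, W.p x s := by
    have : ∀ w, (if w = x then 0 else ∑ z, W.m z * W.p z x * W.p z w / (1 - W.p z x)) =
      ∑ z, (W.m z * W.p z x / (1 - W.p z x)) * (if w = x then 0 else W.p z w) := by
      intro w
      split_ifs
      · simp
      · exact Finset.sum_congr rfl fun z _ => by ring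
    simp only [this]
    rw [Finset.sum_comm]
    refine Finset.sum_congr rfl fun z _ => ?_
    rw [← Finset.mul_sum, psum W h0, mul_one]
    by_cases hz : x ⋖ z
    · have hlt := p_lt W hstd hcov h0 hz
      have e : ∑ w, (if w = x then 0 else W.p z w) = 1 - W.p z x := by
        rw [← psum W (y := z) (by rw [W.rk_covBy _ _ hz]; omega),
          ← Finset.sum_erase_eq_sub (Finset.mem_univ x), ← Finset.filter_ne', Finset.sum_filter]
        refine Finset.sum_congr rfl fun w _ => ?_
        by_cases h : w = x <;> simp [h]
      rw [e, div_mul_cancel₀]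
      linarith
    · simp [p0 W hz]
  have hR : ∑ w, (if w = x then 0 else ∑ z, W.m z * W.p z x * W.p z w *
      ∑ s, W.p x s * W.p w s / (Q W s z - W.p z x * W.p x s)) =
      ∑ z, W.m z * W.p z x * ∑ s, W.p x s * ((Q W s z - W.p z x * W.p x s) / (Q W s z - W.p z x * W.p x s)) := by
    have : ∀ w, (if w = x then 0 else ∑ z, W.m z * W.p z x * W.p z w *
      ∑ s, W.p x s * W.p w s / (Q W s z - W.p z x * W.p x s)) =
      ∑ z, W.m z * W.p z x * ∑ s, W.p x s * ((if w = x then 0 else W.p z w * W.p w s) / (Q W s z - W.p z x * W.p x s)) := by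
      intro w
      split_ifs
      · simp
      · refine Finset.sum_congr rfl fun z _ => ?_
        rw [mul_assoc, Finset.mul_sum]
        congr 1
        exact Finset.sum_congr rfl fun s _ => by ring
    simp only [this]
    rw [Finset.sum_comm]
    refine Finset.sum_congr rfl fun z _ => ?_
    rw [← Finset.mul_sum, Finset.sum_comm]
    congr 1
    refine Finset.sum_congr rfl fun s _ => ?_
    rw [← Finset.mul_sum, ← Finset.sum_div, ← Q_sub]
  rw [hL, hR] at hsum
  intro hdeg
  have hterm : ∀ z s, W.p x s * ((Q W s z - W.p z x * W.p x s) / (Q W s z - W.p z x * W.p x s)) ≤ W.p x s := by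
    intro z s
    exact mul_le_of_le_one_right (W.p_nonneg _ _) (div_self_le_one _)
  have hlt : ∑ z, W.m z * W.p z x * ∑ s, W.p x s * ((Q W s z - W.p z x * W.p x s) / (Q W s z - W.p z x * W.p x s)) < ∑ z, W.m z * W.p z x * ∑ s, W.p x s := by
    refine Finset.sum_lt_sum (fun z _ => ?_) ⟨z, Finset.mem_univ _, ?_⟩
    · exact mul_le_mul_of_nonneg_left (Finset.sum_le_sum fun s _ => hterm z s)
        (mul_nonneg (W.m_pos _).le (W.p_nonneg _ _))
    · refine mul_lt_mul_of_pos_left ?_ (mul_pos (W.m_pos _) ((W.p_pos_iff _ _).2 hz))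
      refine Finset.sum_lt_sum (fun s _ => hterm z s) ⟨s, Finset.mem_univ _, ?_⟩
      rw [hdeg, div_zero, mul_zero]
      exact (W.p_pos_iff _ _).2 hs
  exact absurd hsum hlt.ne'

theorem std_eq (hstd : W.Standard) {x y z : P} (hx : x ⋖ z) (hy : y ⋖ z) : W.p z x = W.p z y := by
  rw [hstd z x hx, hstd z y hy]

theorem no_lt (hstd : W.Standard) (hAL : W.AL) {x w : P} (h0 : 0 ≤ W.rk x)
    (h1 : W.rk x ≤ W.d - 1) (hr : W.rk w = W.rk x) {s z : P} (hsx : s ⋖ x) (hsw : s ⋖ w)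
    (hxz : x ⋖ z) (hwz : w ⋖ z) : ¬ W.p x s < W.p w s := by
  intro hlt
  have hne : x ≠ w := by rintro rfl; exact lt_irrefl _ hlt
  have e1 := AL' W hAL h0 h1 hne
  have e2 := AL' W hAL (hr ▸ h0) (hr ▸ h1) hne.symm
  have e3 : ∑ z, W.m z * W.p z x * W.p z w / (1 - W.p z x) =
     ∑ z, W.m z * W.p z w * W.p z x / (1 - W.p z w) := by
    refine Finset.sum_congr rfl fun z _ => ?_
    by_cases hx : x ⋖ z
    · by_cases hw : w ⋖ z
      · rw [std_eq W hstd hx hw]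
      · simp [p0 W hw]
    · simp [p0 W hx]
  rw [e1, e2] at e3
  -- termwise comparison
  have hple : ∀ t, t ⋖ x → t ⋖ w → W.p x t < W.p w t := by
    intro t htx htw
    rw [std_eq W hstd htx hsx, std_eq W hstd htw hsw]; exact hlt
  have hin : ∀ z, x ⋖ z → w ⋖ z → ∀ t, t ⋖ x → t ⋖ w →
      W.p x t * W.p w t / (Q W t z - W.p z x * W.p x t) <
      W.p w t * W.p x t / (Q W t z - W.p z w * W.p w t) := by
    intro z hx hw t htx htw
    have hd := Q_gt W (y := w) hne htx hx
    have hpz : 0 < W.p z x := (W.p_pos_iff _ _).2 hx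
    have hpx : 0 < W.p x t := (W.p_pos_iff _ _).2 htx
    have hpw : 0 < W.p w t := (W.p_pos_iff _ _).2 htw
    have hpl := hple t htx htw
    rw [mul_comm (W.p w t)]
    refine div_lt_div_of_pos_left (mul_pos hpx hpw) hd ?_
    rw [← std_eq W hstd hx hw]
    nlinarith
  have hin' : ∀ z, x ⋖ z → w ⋖ z → ∀ t, 
      W.p x t * W.p w t / (Q W t z - W.p z x * W.p x t) ≤
      W.p w t * W.p x t / (Q W t z - W.p z w * W.p w t) := by
    intro z hx hw t
    by_cases htx : t ⋖ x
    · by_cases htw : t ⋖ w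
      · exact (hin z hx hw t htx htw).le
      · simp [p0 W htw]
    · simp [p0 W htx]
  refine absurd e3 (ne_of_lt ?_)
  refine Finset.sum_lt_sum (fun z _ => ?_) ⟨z, Finset.mem_univ _, ?_⟩
  · by_cases hx : x ⋖ z
    · by_cases hw : w ⋖ z
      · rw [mul_right_comm (W.m z) (W.p z x) (W.p z w)]
        exact mul_le_mul_of_nonneg_left (Finset.sum_le_sum fun t _ => hin' z hx hw t)
          (mul_nonneg (mul_nonneg (W.m_pos _).le (W.p_nonneg _ _)) (W.p_nonneg _ _))
      · simp [p0 W hw]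
    · simp [p0 W hx]
  · rw [mul_right_comm (W.m z) (W.p z x) (W.p z w)]
    refine mul_lt_mul_of_pos_left (Finset.sum_lt_sum (fun t _ => hin' z hxz hwz t)
      ⟨s, Finset.mem_univ _, hin z hxz hwz s hsx hsw⟩) ?_
    exact mul_pos (mul_pos (W.m_pos _) ((W.p_pos_iff _ _).2 hwz)) ((W.p_pos_iff _ _).2 hxz)

/-- simplified link adjacency entry -/
def aL (s y w : P) : ℝ := if w = y then 0 else
  ∑ z, W.m z * W.p z w * W.p w s * W.p z y / (Q W s z - W.p z y * W.p y s) / W.m y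

theorem adjMatL_eq {s y w : P} (hy : s ⋖ y) (hw : s ⋖ w) : W.adjMatL s y w = aL W s y w := by
  simp only [WGP.adjMatL, Matrix.of_apply, aL]
  split_ifs with h
  · rfl
  rw [Finset.sum_filter]
  refine Finset.sum_congr rfl fun z _ => ?_
  split_ifs with hz
  · have hd := (Q_gt W (y := y) h hw hz.1).ne'
    have hq := (lt_of_lt_of_le (mul_pos ((W.p_pos_iff _ _).2 hz.1) ((W.p_pos_iff _ _).2 hw)) (Q_ge W s w z)).ne'
    have hm := (W.m_pos y).ne'
    have hms := (W.m_pos s).ne'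
    have hp := ((W.p_pos_iff _ _).2 hy).ne'
    simp only [WGP.mL, WGP.pL, ch1 W hy, ch1 W hw, ch2 W hy hz.2]
    have : 1 - W.p z y * W.p y s / Q W s z = (Q W s z - W.p z y * W.p y s) / Q W s z := by
      field_simp
    rw [this]
    field_simp
  · rw [not_and_or] at hz
    rcases hz with hc | hc <;> simp [p0 W hc]

theorem aL_nonneg (s y w : P) : 0 ≤ aL W s y w := by
  unfold aL
  split_ifs
  · exact le_rfl
  · refine Finset.sum_nonneg fun z _ => ?_
    have := Q_ge W s y z
    have h1 := W.p_nonneg z w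
    have h2 := W.p_nonneg w s
    have h3 := W.p_nonneg z y
    have h4 := (W.m_pos y).le
    have h5 := (W.m_pos z).le
    have h6 : 0 ≤ Q W s z - W.p z y * W.p y s := by linarith
    positivity

theorem aL_zero {s y w : P} (h : ¬ s ⋖ w) : aL W s y w = 0 := by
  simp [aL, p0 W h]

theorem aL_sum (hstd : W.Standard)
    (hcov : ∀ y : P, 1 ≤ W.rk y → 2 ≤ (Finset.univ.filter (fun z => z ⋖ y)).card)
    (hAL : W.AL) {y : P} (h0 : 0 ≤ W.rk y) (h1 : W.rk y ≤ W.d - 1) {s : P}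
    (hs : s ⋖ y) : ∑ w, aL W s y w = 1 := by
  have : ∀ w, aL W s y w = ∑ z, W.m z * W.p z y / (Q W s z - W.p z y * W.p y s) / W.m y *
      (if w = y then 0 else W.p z w * W.p w s) := by
    intro w
    unfold aL
    split_ifs
    · simp
    · exact Finset.sum_congr rfl fun z _ => by ring
  simp only [this]
  rw [Finset.sum_comm]
  have h2 : ∀ z, ∑ w, W.m z * W.p z y / (Q W s z - W.p z y * W.p y s) / W.m y *
      (if w = y then 0 else W.p z w * W.p w s) = W.p z y * W.m z / W.m y := by
    intro z
    rw [← Finset.mul_sum, ← Q_sub]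
    by_cases hz : y ⋖ z
    · have := nondeg W hstd hcov hAL h0 h1 hs hz
      have hm := (W.m_pos y).ne'
      field_simp
    · simp [p0 W hz]
  simp only [h2]
  rw [← Finset.sum_div, msum W (by omega), div_self (W.m_pos y).ne']

theorem aL_symm (hstd : W.Standard) (hAL : W.AL) {y w : P} (h0 : 0 ≤ W.rk y)
    (h1 : W.rk y ≤ W.d - 1) {s : P} (hs : s ⋖ y) (hs' : s ⋖ w) :
    W.m y * W.p y s * aL W s y w = W.m w * W.p w s * aL W s w y := by
  have hr : W.rk w = W.rk y := by rw [W.rk_covBy _ _ hs, W.rk_covBy _ _ hs']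
  unfold aL
  by_cases h : w = y
  · simp [h]
  · rw [if_neg h, if_neg (Ne.symm h), Finset.mul_sum, Finset.mul_sum]
    refine Finset.sum_congr rfl fun z _ => ?_
    by_cases hy : y ⋖ z
    · by_cases hw : w ⋖ z
      · have a := no_lt W hstd hAL h0 h1 hr hs hs' hy hw
        have b := no_lt W hstd hAL (hr ▸ h0) (hr ▸ h1) hr.symm hs' hs hw hy
        have e : W.p y s = W.p w s := le_antisymm (not_lt.1 b) (not_lt.1 a)
        rw [std_eq W hstd hy hw, e]
        have := (W.m_pos y).ne'
        have := (W.m_pos w).ne'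
        field_simp
      · simp [p0 W hw]
    · simp [p0 W hy]

theorem adj_decomp (hAL : W.AL) {y : P} (h0 : 0 ≤ W.rk y) (h1 : W.rk y ≤ W.d - 1) (w : P) :
    W.adjMat y w = ∑ s, W.p y s * aL W s y w := by
  simp only [WGP.adjMat, Matrix.of_apply, aL]
  by_cases h : w = y
  · simp [h]
  simp only [if_neg h]
  have e := AL' W hAL h0 h1 (Ne.symm h)
  have hm := (W.m_pos y).ne'
  have l1 : ∑ z ∈ univ.filter (fun z => w ⋖ z ∧ y ⋖ z),
      W.m z * W.p z w * W.p z y / ((1 - W.p z y) * W.m y) =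
      (∑ z, W.m z * W.p z y * W.p z w / (1 - W.p z y)) / W.m y := by
    rw [Finset.sum_filter, Finset.sum_div]
    refine Finset.sum_congr rfl fun z _ => ?_
    split_ifs with hz
    · rw [div_div, mul_right_comm]
    · rw [not_and_or] at hz
      rcases hz with hc | hc <;> simp [p0 W hc]
  rw [l1, e, Finset.sum_div]
  simp only [Finset.mul_sum, Finset.sum_div]
  rw [Finset.sum_comm]
  refine Finset.sum_congr rfl fun s _ => Finset.sum_congr rfl fun z _ => ?_
  ring

theorem main (hstd : W.Standard)
    (hcov : ∀ y : P, 1 ≤ W.rk y → 2 ≤ (Finset.univ.filter (fun z => z ⋖ y)).card)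
    (hAL : W.AL)
    (lam : ℝ) (hlam : 0 ≤ lam)
    (hbd : ∀ x : P, W.rk x ≤ W.d - 2 → lamBd (W.AdjEndL x) lam)
    (l : ℤ) (hl0 : 0 ≤ l) (hld : l ≤ W.d - 1) (f : P → ℝ) (s : P) (hs : W.rk s = l - 1) :
    ∑ y, W.m y * W.p y s * (∑ w, aL W s y w * f w - W.Down f s)^2 ≤
      lam^2 * ∑ y, W.m y * W.p y s * (f y)^2 := by
  have hms := W.m_pos s
  have key := local_bound (Y := {y : P // s ⋖ y}) ((W.adjMatL s).submatrix Subtype.val Subtype.val)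
    (fun y => W.m y.1 * W.p y.1 s / W.m s)
    (fun y => div_pos (mul_pos (W.m_pos _) ((W.p_pos_iff _ _).2 y.2)) hms)
  have hsub : ∀ g : P → ℝ, (∀ y, ¬ s ⋖ y → g y = 0) → ∑ y : {y : P // s ⋖ y}, g y.1 = ∑ y, g y := by
    intro g hg
    rw [← Finset.sum_subtype (univ.filter (fun y => s ⋖ y)) (by simp) g, Finset.sum_filter]
    refine Finset.sum_congr rfl fun y _ => ?_
    split_ifs with h
    · rfl
    · exact (hg y h).symm
  have hrk : ∀ y : {y : P // s ⋖ y}, W.rk y.1 = l := fun y => by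
    rw [W.rk_covBy _ _ y.2, hs]; ring
  have hrow : ∀ (g : P → ℝ) (y : {y : P // s ⋖ y}), ∑ w : {y : P // s ⋖ y},
      (W.adjMatL s).submatrix Subtype.val Subtype.val y w * g w.1 = ∑ w, aL W s y.1 w * g w := by
    intro g y
    rw [← hsub (fun w => aL W s y.1 w * g w) (fun w hw => by simp [aL_zero W hw])]
    refine Finset.sum_congr rfl fun w _ => ?_
    rw [Matrix.submatrix_apply, adjMatL_eq W y.2 w.2]
  have hdown : ∑ w : {y : P // s ⋖ y}, W.m w.1 * W.p w.1 s / W.m s * f w.1 = W.Down f s := by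
    rw [hsub (fun w => W.m w * W.p w s / W.m s * f w) (fun w hw => by simp [p0 W hw])]
    simp only [WGP.Down, WGP.downMat, Matrix.mulVec, dotProduct, Matrix.of_apply]
    exact Finset.sum_congr rfl fun w _ => by ring
  have k2 := key ?_ ?_ ?_ ?_ lam hlam (hbd s (by omega)) (fun y => f y.1)
  · simp only [hrow, hdown] at k2
    rw [hsub (fun y => W.m y * W.p y s / W.m s * (∑ w, aL W s y w * f w - W.Down f s)^2)
      (fun w hw => by simp [p0 W hw]),
      hsub (fun y => W.m y * W.p y s / W.m s * (f y)^2) (fun w hw => by simp [p0 W hw])] at k2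
    simp only [div_mul_eq_mul_div, ← Finset.sum_div] at k2
    rw [← mul_div_assoc] at k2
    exact (div_le_div_iff_of_pos_right hms).1 k2
  · rw [hsub (fun w => W.m w * W.p w s / W.m s) (fun w hw => by simp [p0 W hw]), ← Finset.sum_div]
    simp only [mul_comm (W.m _)]
    rw [msum W (by omega), div_self hms.ne']
  · intro y w
    rw [Matrix.submatrix_apply, adjMatL_eq W y.2 w.2]
    exact aL_nonneg W _ _ _
  · intro y
    have := hrow (fun _ => 1) y
    simp only [mul_one] at this
    rw [this]
    exact aL_sum W hstd hcov hAL (by rw [hrk]; exact hl0) (by rw [hrk]; exact hld) y.2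
  · intro y w
    simp only [Matrix.submatrix_apply]
    rw [adjMatL_eq W y.2 w.2, adjMatL_eq W w.2 y.2, div_mul_eq_mul_div, div_mul_eq_mul_div,
      aL_symm W hstd hAL (by rw [hrk]; exact hl0) (by rw [hrk]; exact hld) y.2 w.2]

theorem final (hstd : W.Standard)
    (hcov : ∀ y : P, 1 ≤ W.rk y → 2 ≤ (Finset.univ.filter (fun z => z ⋖ y)).card)
    (hAL : W.AL)
    (lam : ℝ) (hlam : 0 ≤ lam)
    (hbd : ∀ x : P, W.rk x ≤ W.d - 2 → lamBd (W.AdjEndL x) lam)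
    (l : ℤ) (hl0 : 0 ≤ l) (hld : l ≤ W.d - 1) (f : P → ℝ) :
    W.normAt l (fun y => W.Adj f y - W.Up (W.Down f) y) ≤ lam * W.normAt l f := by
  have hmain := main W hstd hcov hAL lam hlam hbd l hl0 hld f
  set h : P → P → ℝ := fun s y => ∑ w, aL W s y w * f w - W.Down f s with hh
  have hB : ∀ y, W.rk y = l → W.Adj f y - W.Up (W.Down f) y = ∑ s, W.p y s * h s y := by
    intro y hy
    simp only [WGP.Adj, WGP.Up, Matrix.mulVec, dotProduct, hh, mul_sub, Finset.sum_sub_distrib]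
    congr 1
    simp only [adj_decomp W hAL (y := y) (by omega) (by omega), Finset.sum_mul, Finset.mul_sum]
    rw [Finset.sum_comm]
    exact Finset.sum_congr rfl fun s _ => Finset.sum_congr rfl fun w _ => by ring
  have hJ : ∀ y, W.rk y = l → (∑ s, W.p y s * h s y)^2 ≤ ∑ s, W.p y s * (h s y)^2 := by
    intro y hy
    simpa using (even_two.convexOn_pow (𝕜 := ℝ)).map_sum_le (t := Finset.univ) (w := fun s => W.p y s)
      (p := fun s => h s y) (fun s _ => W.p_nonneg _ _) (psum W (by omega)) (fun _ _ => Set.mem_univ _)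
  have hlv : ∀ g : P → P → ℝ, (∑ y ∈ W.lvl l, ∑ s, W.m y * W.p y s * g s y) =
      ∑ s ∈ W.lvl (l-1), ∑ y, W.m y * W.p y s * g s y := by
    intro g
    simp only [WGP.lvl, Finset.sum_filter]
    have a1 : ∀ y, (if W.rk y = l then ∑ s, W.m y * W.p y s * g s y else 0) =
        ∑ s, if W.rk y = l then W.m y * W.p y s * g s y else 0 := by
      intro y; split_ifs <;> simp
    have a2 : ∀ s, (if W.rk s = l - 1 then ∑ y, W.m y * W.p y s * g s y else 0) =
        ∑ y, if W.rk s = l - 1 then W.m y * W.p y s * g s y else 0 := by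
      intro y; split_ifs <;> simp
    simp only [a1, a2]
    rw [Finset.sum_comm]
    refine Finset.sum_congr rfl fun s _ => Finset.sum_congr rfl fun y _ => ?_
    by_cases hc : s ⋖ y
    · have := W.rk_covBy _ _ hc
      have : W.rk y = l ↔ W.rk s = l - 1 := by omega
      simp [this]
    · simp [p0 W hc]
  have hsq : W.normSqAt l (fun y => W.Adj f y - W.Up (W.Down f) y) ≤ lam^2 * W.normSqAt l f := by
    simp only [WGP.normSqAt, WGP.innerAt]
    calc _ ≤ ∑ y ∈ W.lvl l, ∑ s, W.m y * W.p y s * (h s y)^2 := by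
          refine Finset.sum_le_sum fun y hy => ?_
          have hy : W.rk y = l := by simpa [WGP.lvl] using hy
          rw [hB y hy, mul_assoc, ← pow_two]
          simp only [mul_assoc, ← Finset.mul_sum]
          exact mul_le_mul_of_nonneg_left (hJ y hy) (W.m_pos y).le
      _ = ∑ s ∈ W.lvl (l-1), ∑ y, W.m y * W.p y s * (h s y)^2 := hlv (fun s y => (h s y)^2)
      _ ≤ ∑ s ∈ W.lvl (l-1), lam^2 * ∑ y, W.m y * W.p y s * (f y)^2 := by
          refine Finset.sum_le_sum fun s hs => hmain s (by simpa [WGP.lvl] using hs)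
      _ = lam^2 * ∑ y ∈ W.lvl l, ∑ s, W.m y * W.p y s * (f y)^2 := by
          rw [← Finset.mul_sum, hlv (fun _ y => (f y)^2)]
      _ = _ := by
          congr 1
          refine Finset.sum_congr rfl fun y hy => ?_
          have hy : W.rk y = l := by simpa [WGP.lvl] using hy
          rw [← Finset.sum_mul, ← Finset.mul_sum, psum W (by omega)]
          ring
  unfold WGP.normAt
  calc _ ≤ √(lam^2 * W.normSqAt l f) := Real.sqrt_le_sqrt hsq
    _ = _ := by rw [Real.sqrt_mul (sq_nonneg _), Real.sqrt_sq hlam]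

end S12

/-- two-sided local spectral expansion implies the eposet
condition `‖A_l − U_{l-1} D_l‖ ≤ λ`, under Property AL. -/
theorem stmt12 {P : Type} [Fintype P] [PartialOrder P] (W : WGP P)
    (hstd : W.Standard)
    (hcov : ∀ y : P, 1 ≤ W.rk y → 2 ≤ (Finset.univ.filter (fun z => z ⋖ y)).card)
    (hAL : W.AL)
    (lam : ℝ) (hlam : 0 ≤ lam)
    (hbd : ∀ x : P, W.rk x ≤ W.d - 2 → lamBd (W.AdjEndL x) lam)
    (l : ℤ) (hl0 : 0 ≤ l) (hld : l ≤ W.d - 1) (f : P → ℝ) :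
    W.normAt l (fun y => W.Adj f y - W.Up (W.Down f) y) ≤ lam * W.normAt l f := by
  exact S12.final W hstd hcov hAL lam hlam hbd l hl0 hld f
end
end

section
/- Let P be a finite pure weighted graded poset of rank d which is a μ-global eposet with constants (r_j, δ_j)_{1≤j≤d−1}. If for some 1 ≤ j ≤ d−1 one has δ_j ≥ 0 and μ < r_j, then the up operator U_j : C^j → C^{j+1} is injective. -/
open Finset

attribute [local instance] Classical.propDecidable

noncomputable section

/-- in a `μ`-global eposet, if `δ_j ≥ 0` and `μ < r_j` then
`U_j` is injective. -/
theorem stmt14 {P : Type} [Fintype P] [PartialOrder P] (W : WGP P)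
    (mu : ℝ) (r δ : ℤ → ℝ)
    (heposet : ∀ j : ℤ, 1 ≤ j → j ≤ W.d - 1 → ∀ f : P → ℝ,
      W.normAt j (fun x => W.Down (W.Up f) x - δ j * W.Up (W.Down f) x - r j * f x)
        ≤ mu * W.normAt j f)
    (j : ℤ) (hj1 : 1 ≤ j) (hj2 : j ≤ W.d - 1) (hδ : 0 ≤ δ j) (hmur : mu < r j) :
    ∀ f : P → ℝ, (∀ y : P, W.rk y = j + 1 → W.Up f y = 0) →
      ∀ x : P, W.rk x = j → f x = 0 := by
  intro f hf x hx
  have hp : ∀ y x : P, W.rk y ≠ W.rk x + 1 → W.p y x = 0 := by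
    intro y x h
    by_contra h0
    have h1 : 0 < W.p y x := lt_of_le_of_ne (W.p_nonneg y x) (Ne.symm h0)
    exact h (W.rk_covBy x y ((W.p_pos_iff y x).1 h1))
  have hDU : ∀ x : P, W.rk x = j → W.Down (W.Up f) x = 0 := by
    intro x hx
    show ∑ y, W.p y x * W.m y / W.m x * W.Up f y = 0
    apply Finset.sum_eq_zero
    intro y _
    by_cases hy : W.rk y = j + 1
    · rw [hf y hy, mul_zero]
    · rw [hp y x (by rw [hx]; exact hy)]; simp
  have hG : 0 ≤ ∑ x ∈ W.lvl j, W.m x * f x * W.Up (W.Down f) x := by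
    have e1 : ∑ x ∈ W.lvl j, W.m x * f x * W.Up (W.Down f) x
        = ∑ z, W.Down f z * ∑ x ∈ W.lvl j, W.p x z * W.m x * f x := by
      have : ∀ x, W.Up (W.Down f) x = ∑ z, W.p x z * W.Down f z := fun x => rfl
      simp only [this, Finset.mul_sum]
      rw [Finset.sum_comm]
      refine Finset.sum_congr rfl fun z _ => Finset.sum_congr rfl fun x _ => ?_
      ring
    rw [e1]
    apply Finset.sum_nonneg
    intro z _
    by_cases hz : W.rk z + 1 = j
    · have e2 : ∑ x ∈ W.lvl j, W.p x z * W.m x * f x = W.m z * W.Down f z := by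
        have e3 : W.Down f z = ∑ y, W.p y z * W.m y / W.m z * f y := rfl
        rw [e3, Finset.mul_sum]
        have hm := (W.m_pos z).ne'
        rw [WGP.lvl, Finset.sum_filter]
        refine Finset.sum_congr rfl fun y _ => ?_
        split_ifs with h
        · field_simp
        · rw [hp y z (by rw [hz]; exact h)]; simp
      rw [e2]
      nlinarith [mul_nonneg (W.m_pos z).le (sq_nonneg (W.Down f z))]
    · have e2 : ∑ x ∈ W.lvl j, W.p x z * W.m x * f x = 0 := by
        apply Finset.sum_eq_zero
        intro y hy
        have hy' : W.rk y = j := by simpa [WGP.lvl] using hy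
        rw [hp y z (by rw [hy']; exact fun h => hz h.symm)]; simp
      rw [e2, mul_zero]
  have key := heposet j hj1 hj2 f
  have hpos : ∀ g : P → ℝ, 0 ≤ W.normSqAt j g := by
    intro g
    apply Finset.sum_nonneg
    intro x _
    nlinarith [mul_nonneg (W.m_pos x).le (sq_nonneg (g x))]
  have hA : 2 * r j * δ j * (∑ x ∈ W.lvl j, W.m x * f x * W.Up (W.Down f) x)
      + r j ^ 2 * W.normSqAt j f ≤ W.normSqAt j
        (fun x => W.Down (W.Up f) x - δ j * W.Up (W.Down f) x - r j * f x) := by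
    unfold WGP.normSqAt WGP.innerAt
    rw [Finset.mul_sum, Finset.mul_sum, ← Finset.sum_add_distrib]
    apply Finset.sum_le_sum
    intro y hy
    have hy' : W.rk y = j := by simpa [WGP.lvl] using hy
    simp only [hDU y hy']
    nlinarith [mul_nonneg (W.m_pos y).le (sq_nonneg (δ j * W.Up (W.Down f) y))]
  have hN : W.normSqAt j f = 0 := by
    by_contra h0
    have hN : 0 < W.normSqAt j f := lt_of_le_of_ne (hpos f) (Ne.symm h0)
    unfold WGP.normAt at key
    have hs := Real.sqrt_pos.2 hN
    have hmu : 0 ≤ mu := by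
      by_contra hneg
      have := mul_neg_of_neg_of_pos (not_le.1 hneg) hs
      have := le_trans (Real.sqrt_nonneg _) key
      linarith
    have k2 := (Real.sqrt_le_left (mul_nonneg hmu hs.le)).1 key
    rw [mul_pow, Real.sq_sqrt hN.le] at k2
    have hr : 0 < r j := lt_of_le_of_lt hmu hmur
    have h1 := mul_nonneg (mul_nonneg (mul_nonneg zero_le_two hr.le) hδ) hG
    have h2 : 0 < (r j ^ 2 - mu ^ 2) * W.normSqAt j f := by
      apply mul_pos _ hN
      nlinarith
    linarith
  have h3 := (Finset.sum_eq_zero_iff_of_nonneg (fun x _ => by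
    nlinarith [mul_nonneg (W.m_pos x).le (sq_nonneg (f x))])).1 hN x
      (by simp [WGP.lvl, hx])
  have hm := (W.m_pos x).ne'
  simpa [hm] using h3
end
end
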